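/- Let (W,S) be a Coxeter system of finite rank with Coxeter matrix m, let B be a base of (W,S) of type C_{2q+1} for some q ≥ 1, and let a,b,c be the elements of B such that m(a,b) = 4 and m(b,c) = 3. Then W has a set of Coxeter generators S' such that B matches a base B' of (W,S') of type B_{2q+1} if and only if m(s,t) = 2 for all pairs (s,t) ∈ (S−B)×B such that m(s,a) < ∞. -/

import Mathlib

/-!
The proof rests on the geometric representation `rep` of a Coxeter system and on the positivity of
roots. Two general facts are derived from it. A finite subgroup fixes a linear form (a point inside
the Tits cone) whose whole stabilizer is finite (`exists_invariant`). And if `J` spans a finite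
parabolic subgroup which is maximal in the sense of a base, then an element that preserves the span
of the simple roots of `J` and sends each of these roots to a positive vector fixes all of them
(`normalizer_fix`).

Type `C` of odd rank `N + 1` is generated by `a, b₀, …, b_{N-1}` with `N` even, where `a` and `b₀`
are joined by the edge of label `4`. Its longest element `z` (`zC`) is central and acts as `-1`, and
`z = a w` with `w` in the commutator subgroup: `w` changes the sign of an even number of coordinates
in the realization by signed permutations (`IsSignedPerm`). The elements `d = a b₀ a` and `b_k`
generate the subgroup of type `D`.

*Necessity.* Let `s ∉ B` with `m s a` finite, so that `⟨s, a⟩` is finite. In the system `S'`, where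
the commutator subgroup `K` of `⟨B⟩` becomes that of a base `B'` of type `D` of odd rank, the
involution `z` centralizes `K`. Commuting with the rotations of order three in `K`, it acts on the
span of the roots of `B'` by a sign. The sign `-1` is impossible, because `-1` is not in the Weyl
group of type `D` of odd rank: `z` times a signed permutation would exchange two simple roots,
contradicting `normalizer_fix`. So `z` fixes the roots of `B'` (`IsD.fix_supported`), and it follows
that a linear form invariant under `a = w z`, with `w ∈ K`, is invariant under `z`
(`IsD.exists_finite`). Hence `s` and `z` lie in a common finite subgroup. Back in the system `S`, a
linear form invariant under `s` and `z` vanishes on the roots of `B`, as `z` acts on them by `-1`; it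
is invariant under `⟨B ∪ {s}⟩`, so this group is finite (`IsC.finite_insert`), and the maximality
of `B` makes `s` commute with `B` (`base_max`).

*Sufficiency.* If every outer generator with finite label to `a` commutes with `B`, then replacing
`a` by the two generators `z` and `d` gives a new Coxeter system: the relations on either side are
consequences of those on the other (`IsC.exists_newSystem`). The set `B' = {d, b₀, …, b_{N-1}}` is a
base of type `D`, and `⟨B⟩ = ⟨z⟩ × ⟨B'⟩`, so the two commutator subgroups are equal.
-/

variable {W : Type*} [Group W]

/-- `S` is a set of Coxeter generators of the group `W`, with Coxeter matrix given by the
restriction of `m` to `S × S` (the value `0` of `m` encodes `∞`). -/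
def IsCoxeterSystemOn (m : W → W → ℕ) (S : Set W) : Prop :=
  ∃ (cm : CoxeterMatrix S) (cs : CoxeterSystem cm W),
    (∀ s : S, cs.simple s = (s : W)) ∧ ∀ s t : S, cm.M s t = m s t

/-- The subset `B` is irreducible: its Coxeter diagram (edges between distinct `x, y` with
`m x y > 2`, including `m x y = ∞`, i.e. `m x y = 0`) is nonempty and connected. -/
def IsIrreducibleOn (m : W → W → ℕ) (B : Set W) : Prop :=
  B.Nonempty ∧ ∀ u ∈ B, ∀ v ∈ B,
    Relation.ReflTransGen
      (fun x y => x ∈ B ∧ y ∈ B ∧ x ≠ y ∧ (m x y = 0 ∨ 2 < m x y)) u v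

/-- `B` is a base of the Coxeter system `(W, S)`: the visual subgroup `⟨B⟩` is a noncyclic,
maximal, finite, irreducible visual subgroup. -/
def IsBase (m : W → W → ℕ) (S B : Set W) : Prop :=
  B ⊆ S ∧ IsIrreducibleOn m B ∧ (Subgroup.closure B : Set W).Finite ∧
    ¬ IsCyclic ↥(Subgroup.closure B) ∧
    ∀ B' : Set W, B' ⊆ S → B ⊆ B' → IsIrreducibleOn m B' →
      (Subgroup.closure B' : Set W).Finite → B' = B

/-- The base `B` matches the base `B'`: the commutator subgroups of the visual subgroups
`⟨B⟩` and `⟨B'⟩` are conjugate in `W`. -/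
def Matches (B B' : Set W) : Prop :=
  ∃ w : W,
    Subgroup.map ((MulAut.conj w).toMonoidHom)
        (⁅Subgroup.closure B, Subgroup.closure B⁆ : Subgroup W)
      = ⁅Subgroup.closure B', Subgroup.closure B'⁆

/-- `(⟨B⟩, B)` has the isomorphism type of the Coxeter system of the Coxeter matrix `std`. -/
def HasType (m : W → W → ℕ) (B : Set W) {n : ℕ} (std : Fin n → Fin n → ℕ) : Prop :=
  ∃ e : ↥B ≃ Fin n, ∀ u v : ↥B, m u v = std (e u) (e v)

/-- The Coxeter matrix of type `Aₙ` (Coxeter's notation): linear diagram, all labels 3. -/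
def aMat (n : ℕ) : Fin n → Fin n → ℕ := fun i j =>
  if i = j then 1 else if i.val + 1 = j.val ∨ j.val + 1 = i.val then 3 else 2

/-- The Coxeter matrix of type `Cₙ` in Coxeter's notation (Bourbaki's `Bₙ`):
linear diagram with labels 3, …, 3, 4. -/
def cMat (n : ℕ) : Fin n → Fin n → ℕ := fun i j =>
  if i = j then 1
  else if i.val + 1 = j.val ∨ j.val + 1 = i.val then
    (if i.val + 1 = n ∨ j.val + 1 = n then 4 else 3)
  else 2

/-- The Coxeter matrix of type `Bₙ` in Coxeter's notation (Bourbaki's `Dₙ`), for `n ≥ 3`: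
a chain `0, …, n-2` with labels 3 together with the edge `{n-3, n-1}` labelled 3. -/
def bMat (n : ℕ) : Fin n → Fin n → ℕ := fun i j =>
  if i = j then 1
  else if ((i.val + 1 = j.val ∧ j.val + 2 ≤ n) ∨ (j.val + 1 = i.val ∧ i.val + 2 ≤ n))
      ∨ (i.val + 3 = n ∧ j.val + 1 = n) ∨ (j.val + 3 = n ∧ i.val + 1 = n) then 3
  else 2

/-- The dihedral Coxeter matrix `D₂(k)` (i.e. `I₂(k)`). -/
def d2Mat (k : ℕ) : Fin 2 → Fin 2 → ℕ := fun i j => if i = j then 1 else k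

/-- The Coxeter matrix of type `G₃` in Coxeter's notation (i.e. `H₃`). -/
def g3Mat : Fin 3 → Fin 3 → ℕ := ![![1,3,2], ![3,1,5], ![2,5,1]]

/-- The Coxeter matrix of type `G₄` in Coxeter's notation (i.e. `H₄`). -/
def g4Mat : Fin 4 → Fin 4 → ℕ := ![![1,3,2,2], ![3,1,3,2], ![2,3,1,5], ![2,2,5,1]]

/-- The Coxeter matrix of type `F₄`. -/
def f4Mat : Fin 4 → Fin 4 → ℕ := ![![1,3,2,2], ![3,1,4,2], ![2,4,1,3], ![2,2,3,1]]

/-- The 2-part of `k`: the largest power of 2 dividing `k` (with `0` encoding `∞`;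
the 2-part of `∞` is `∞`). -/
def twoPart (k : ℕ) : ℕ := if k = 0 then 0 else 2 ^ (k.factorization 2)

/-- The subgroup `N_b`: the normal closure in `W` of the elements `(st) ^ b(s,t)` for
`s, t ∈ S` with `m s t < ∞`, where `b(s,t)` is the 2-part of `m s t`. -/
def NbSubgroup (m : W → W → ℕ) (S : Set W) : Subgroup W :=
  Subgroup.normalClosure
    {x | ∃ s ∈ S, ∃ t ∈ S, m s t ≠ 0 ∧ x = (s * t) ^ twoPart (m s t)}

instance (m : W → W → ℕ) (S : Set W) : (NbSubgroup m S).Normal :=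
  Subgroup.normalClosure_normal

/-- `(a, b)` is a special pair of elements of `S`: `m a b ≡ 2 mod 4` and either `v = a` or
`v = b` has the property that `m s a = m s b = 2` for every `s ∈ S \ {a, b}` with
`m s v < ∞`. -/
def IsSpecialPair (m : W → W → ℕ) (S : Set W) (a b : W) : Prop :=
  a ∈ S ∧ b ∈ S ∧ a ≠ b ∧ m a b % 4 = 2 ∧
    ((∀ s ∈ S, s ≠ a → s ≠ b → m s a ≠ 0 → m s a = 2 ∧ m s b = 2) ∨
     (∀ s ∈ S, s ≠ a → s ≠ b → m s b ≠ 0 → m s a = 2 ∧ m s b = 2))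

open scoped Classical in
/-- `m̄ a b = 2` if `(a, b)` is a special pair and `m̄ a b = m a b` otherwise. -/
noncomputable def mbar (m : W → W → ℕ) (S : Set W) (a b : W) : ℕ :=
  if IsSpecialPair m S a b then 2 else m a b

/-- The subgroup `N_e`: the normal closure in `W` of the elements `st` with `m s t` odd
together with the elements `(ab)²` with `(a, b)` a special pair. -/
def NeSubgroup (m : W → W → ℕ) (S : Set W) : Subgroup W :=
  Subgroup.normalClosure
    ({x | ∃ s ∈ S, ∃ t ∈ S, Odd (m s t) ∧ x = s * t} ∪
     {x | ∃ a b : W, IsSpecialPair m S a b ∧ x = (a * b) ^ 2})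

instance (m : W → W → ℕ) (S : Set W) : (NeSubgroup m S).Normal :=
  Subgroup.normalClosure_normal

/-- The word length of `w` with respect to the generating set `B`. -/
noncomputable def wordLength (B : Set W) (w : W) : ℕ :=
  sInf {n | ∃ l : List W, (∀ x ∈ l, x ∈ B) ∧ l.length = n ∧ l.prod = w}

/-- `z` is a longest element of the visual subgroup `⟨B⟩`. -/
def IsLongestElement (B : Set W) (z : W) : Prop :=
  z ∈ Subgroup.closure B ∧
    ∀ w ∈ Subgroup.closure B, wordLength B w ≤ wordLength B z

/-- The basic subgroup `⟨B⟩` of `(W, S)` is reduced: for every set of Coxeter generators `S'`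
of `W`, any base of `(W, S')` matching `B` generates a subgroup of order at least `|⟨B⟩|`. -/
def IsReducedBase (m : W → W → ℕ) (S B : Set W) : Prop :=
  ∀ (S' : Set W) (m' : W → W → ℕ) (B' : Set W),
    IsCoxeterSystemOn m' S' → S'.Finite → IsBase m' S' B' → Matches B B' →
      Nat.card ↥(Subgroup.closure B) ≤ Nat.card ↥(Subgroup.closure B')

/-- The isomorphism type of `(⟨B⟩, B)` belongs to the family `F` of isomorphism types of
Coxeter systems (a family of Coxeter matrices). -/
def TypeIn (F : ∀ n : ℕ, (Fin n → Fin n → ℕ) → Prop) (m : W → W → ℕ) (B : Set W) : Prop :=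
  ∃ (n : ℕ) (Mt : Fin n → Fin n → ℕ), F n Mt ∧ HasType m B Mt

/-- The subgroup `N(F)`: the normal closure in `W` of the commutator subgroups of all
reduced basic subgroups of `(W, S)` of type in `F` together with the commutator subgroups of
all unreduced basic subgroups of `(W, S)` matching a reduced basic subgroup of type in `F`
of another system `(W, S')`. -/
def NFSubgroup (F : ∀ n : ℕ, (Fin n → Fin n → ℕ) → Prop)
    (m : W → W → ℕ) (S : Set W) : Subgroup W :=
  Subgroup.normalClosure
    {x | ∃ B : Set W, IsBase m S B ∧
      x ∈ (⁅Subgroup.closure B, Subgroup.closure B⁆ : Subgroup W) ∧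
      ((IsReducedBase m S B ∧ TypeIn F m B) ∨
       (¬ IsReducedBase m S B ∧ ∃ (S' : Set W) (m' : W → W → ℕ) (B' : Set W),
          IsCoxeterSystemOn m' S' ∧ S'.Finite ∧ IsBase m' S' B' ∧
          IsReducedBase m' S' B' ∧ TypeIn F m' B' ∧ Matches B B'))}

instance (F : ∀ n : ℕ, (Fin n → Fin n → ℕ) → Prop) (m : W → W → ℕ) (S : Set W) :
    (NFSubgroup F m S).Normal :=
  Subgroup.normalClosure_normal

/-- The normal closure, within the subgroup `H`, of the subset `X ⊆ H`,
as a subgroup of the ambient group. -/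
def nClosIn (H : Subgroup W) (X : Set W) : Subgroup W :=
  Subgroup.map H.subtype (Subgroup.normalClosure ((fun x : H => (x : W)) ⁻¹' X))

/-- The generating set for the subgroup `N(⟨B⟩)` of a basic subgroup `⟨B⟩` of rank at least 3:
the commutator subgroup of `⟨B⟩` if the rank is at least 5 or the type is `A₄`, `G₃` or `G₄`;
`a₁a₃` for type `A₃`; `b₁b₂, b₂b₃` (products of distinct commuting generators) for type `B₄`;
`(c₂c₃)²` for type `C₃`; `c₁c₃` for type `C₄`; and `(f₂f₃)²` for type `F₄`. -/
def genSetNB (m : W → W → ℕ) (B : Set W) : Set W :=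
  {x | ((5 ≤ B.ncard ∨ HasType m B (aMat 4) ∨ HasType m B g3Mat ∨ HasType m B g4Mat) ∧
          x ∈ (⁅Subgroup.closure B, Subgroup.closure B⁆ : Subgroup W)) ∨
       (HasType m B (aMat 3) ∧ ∃ u ∈ B, ∃ v ∈ B, u ≠ v ∧ m u v = 2 ∧ x = u * v) ∨
       (HasType m B (bMat 4) ∧ ∃ u ∈ B, ∃ v ∈ B, u ≠ v ∧ m u v = 2 ∧ x = u * v) ∨
       (HasType m B (cMat 3) ∧ ∃ u ∈ B, ∃ v ∈ B, m u v = 4 ∧ x = (u * v) ^ 2) ∨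
       (HasType m B (cMat 4) ∧ ∃ u ∈ B, ∃ p ∈ B, ∃ v ∈ B, ∃ q ∈ B,
          m u p = 3 ∧ m p v = 3 ∧ m v q = 4 ∧ m u v = 2 ∧ x = u * v) ∨
       (HasType m B f4Mat ∧ ∃ u ∈ B, ∃ v ∈ B, m u v = 4 ∧ x = (u * v) ^ 2)}

/-- The subgroup `N(⟨B⟩)` of the visual subgroup `⟨B⟩`, viewed as a subgroup of `W`. -/
def NBSubgroup (m : W → W → ℕ) (B : Set W) : Subgroup W :=
  nClosIn (Subgroup.closure B) (genSetNB m B)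

/-- The subgroup `N(W)`: the normal closure in `W` of the subgroups `N(⟨B⟩)` over all
bases `B` of `(W, S)` of rank greater than 2. -/
def NWSubgroup (m : W → W → ℕ) (S : Set W) : Subgroup W :=
  Subgroup.normalClosure
    {x | ∃ B : Set W, IsBase m S B ∧ 2 < B.ncard ∧ x ∈ NBSubgroup m B}

instance (m : W → W → ℕ) (S : Set W) : (NWSubgroup m S).Normal :=
  Subgroup.normalClosure_normal

/-! ### The geometric representation -/

namespace COdd

open CoxeterSystem

section Rep

variable {I : Type*} (M : CoxeterMatrix I)

/-- The pairing with the `i`-th simple coroot: the linear form with `co M i (al j) = -2 cos (π / m)`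
for `m = M i j`. The value `m = 0` stands for `∞`, and the Lean convention `π / 0 = 0` gives `-2`,
the usual value for infinite labels. -/
noncomputable def co (i : I) : (I →₀ ℝ) →ₗ[ℝ] ℝ :=
  Finsupp.linearCombination ℝ (fun j => -2 * Real.cos (Real.pi / M i j))

/-- The `i`-th simple root. -/
noncomputable abbrev al (i : I) : I →₀ ℝ := Finsupp.single i 1

theorem co_al (i j : I) : co M i (al j) = -2 * Real.cos (Real.pi / M i j) := by
  simp [co, al]

theorem co_self (i : I) : co M i (al i) = 2 := by
  simp [co_al]

theorem co_symm (i j : I) : co M i (al j) = co M j (al i) := by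
  rw [co_al, co_al, M.symmetric]

/-- The reflection in the `i`-th simple root. -/
noncomputable def refl (i : I) : Module.End ℝ (I →₀ ℝ) :=
  LinearMap.id - (co M i).smulRight (al i)

theorem refl_apply (i : I) (v : I →₀ ℝ) : refl M i v = v - co M i v • al i := by
  simp [refl]

theorem refl_refl (i : I) : refl M i * refl M i = 1 := by
  refine LinearMap.ext fun v => ?_
  simp only [Module.End.mul_apply, refl_apply, map_sub, map_smul, co_self,
    Module.End.one_apply]
  module

/-- The product of two simple reflections rotates the plane of the two roots by `2π / m` and fixes
the common kernel of the two coroots, so it satisfies the Coxeter relation. -/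
theorem refl_pow_al (i j : I) (h0 : M i j ≠ 0) (h1 : M i j ≠ 1) :
    (refl M i * refl M j) ^ M i j = 1 := by
  have hm2 : 2 ≤ M i j := by omega
  have hmR : (2 : ℝ) ≤ M i j := by exact_mod_cast hm2
  set φ : ℝ := Real.pi / M i j with hφ
  have hφ0 : 0 < φ := by positivity
  have hφ1 : φ < Real.pi := by
    rw [hφ, div_lt_iff₀ (by linarith)]
    nlinarith [Real.pi_pos]
  have hs : Real.sin φ ≠ 0 := (Real.sin_pos_of_pos_of_lt_pi hφ0 hφ1).ne'
  have hmφ : (M i j : ℝ) * φ = Real.pi := by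
    rw [hφ]; field_simp
  have hij : co M i (al j) = -2 * Real.cos φ := co_al M i j
  have hji : co M j (al i) = -2 * Real.cos φ := by rw [co_symm, hij]
  have key : ∀ x y : ℝ, (refl M i * refl M j) (x • al i + y • al j) =
      ((4 * Real.cos φ ^ 2 - 1) * x - 2 * Real.cos φ * y) • al i +
        (2 * Real.cos φ * x - y) • al j := by
    intro x y
    simp only [Module.End.mul_apply, refl_apply, map_sub, map_add, map_smul, co_self, hij, hji]
    module
  have hp : ∀ k : ℕ, ((refl M i * refl M j) ^ k) (al i) =
      (Real.sin ((2 * k + 1) * φ) / Real.sin φ) • al i +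
        (Real.sin (2 * k * φ) / Real.sin φ) • al j := by
    intro k
    induction k with
    | zero => simp [hs]
    | succ k ih =>
      rw [pow_succ', Module.End.mul_apply, ih, key]
      have e1 : ((2 * ((k + 1 : ℕ) : ℝ) + 1) * φ) = 2 * k * φ + 3 * φ := by push_cast; ring
      have e2 : (2 * ((k + 1 : ℕ) : ℝ) * φ) = 2 * k * φ + 2 * φ := by push_cast; ring
      have e3 : ((2 * (k : ℝ) + 1) * φ) = 2 * k * φ + φ := by ring
      rw [e1, e2, e3]
      simp only [Real.sin_add, Real.sin_two_mul, Real.cos_two_mul, Real.sin_three_mul,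
        Real.cos_three_mul]
      have := Real.sin_sq φ
      congr 2
      · field_simp
        rw [this]; ring
      · field_simp
        ring
  have hq : ∀ k : ℕ, ((refl M i * refl M j) ^ k) (al j) =
      (-Real.sin (2 * k * φ) / Real.sin φ) • al i +
        (- Real.sin ((2 * k - 1) * φ) / Real.sin φ) • al j := by
    intro k
    induction k with
    | zero => simp [hs]
    | succ k ih =>
      rw [pow_succ', Module.End.mul_apply, ih, key]
      have e1 : ((2 * ((k + 1 : ℕ) : ℝ) - 1) * φ) = 2 * k * φ + φ := by push_cast; ring
      have e2 : (2 * ((k + 1 : ℕ) : ℝ) * φ) = 2 * k * φ + 2 * φ := by push_cast; ring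
      have e3 : ((2 * (k : ℝ) - 1) * φ) = 2 * k * φ - φ := by ring
      rw [e1, e2, e3]
      simp only [Real.sin_add, Real.sin_sub, Real.sin_two_mul, Real.cos_two_mul]
      congr 2
      · field_simp
        ring
      · field_simp
        ring
  have hp' : ((refl M i * refl M j) ^ M i j) (al i) = al i := by
    rw [hp]
    have e1 : (2 * (M i j : ℝ) + 1) * φ = φ + 2 * Real.pi := by linarith
    have e2 : 2 * (M i j : ℝ) * φ = 2 * Real.pi := by linarith
    rw [e1, e2]
    simp [hs]
  have hq' : ((refl M i * refl M j) ^ M i j) (al j) = al j := by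
    rw [hq]
    have e1 : (2 * (M i j : ℝ) - 1) * φ = - φ + 2 * Real.pi := by linarith
    have e2 : 2 * (M i j : ℝ) * φ = 2 * Real.pi := by linarith
    rw [e1, e2, Real.sin_add_two_pi]
    simp [hs]
  refine LinearMap.ext fun v => ?_
  -- `v` is the sum of a vector orthogonal to both roots and a combination of the two roots
  obtain ⟨A, B, u, hv, hu1, hu2⟩ : ∃ A B : ℝ, ∃ u : I →₀ ℝ, v = u + A • al i + B • al j ∧
      co M i u = 0 ∧ co M j u = 0 := by
    have hs2 : 4 * Real.sin φ ^ 2 ≠ 0 := by positivity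
    refine ⟨(2 * co M i v + 2 * Real.cos φ * co M j v) / (4 * Real.sin φ ^ 2),
      (2 * Real.cos φ * co M i v + 2 * co M j v) / (4 * Real.sin φ ^ 2),
      v - ((2 * co M i v + 2 * Real.cos φ * co M j v) / (4 * Real.sin φ ^ 2)) • al i -
      ((2 * Real.cos φ * co M i v + 2 * co M j v) / (4 * Real.sin φ ^ 2)) • al j, ?_, ?_, ?_⟩
    · module
    · simp only [map_sub, map_smul, co_self, hij, smul_eq_mul]
      field_simp
      rw [Real.sin_sq]; ring
    · simp only [map_sub, map_smul, co_self, hji, smul_eq_mul]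
      field_simp
      rw [Real.sin_sq]; ring
  have hu : ∀ k : ℕ, ((refl M i * refl M j) ^ k) u = u := by
    intro k
    induction k with
    | zero => simp
    | succ k ih =>
      rw [pow_succ', Module.End.mul_apply, ih]
      simp [refl_apply, hu1, hu2]
  rw [hv]
  simp only [map_add, map_smul, hu, hp', hq', Module.End.one_apply]

theorem refl_liftable : M.IsLiftable (refl M) := by
  intro i j
  by_cases h0 : M i j = 0
  · simp [h0]
  by_cases h1 : M i j = 1
  · have : i = j := by
      by_contra h
      exact M.off_diagonal i j h h1
    subst this
    simp [refl_refl]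
  exact refl_pow_al M i j h0 h1

variable {M} (cs : CoxeterSystem M W)

/-- The geometric representation of the Coxeter group, on the space with the simple roots as
basis. -/
noncomputable def rep : W →* Module.End ℝ (I →₀ ℝ) := cs.lift ⟨refl M, refl_liftable M⟩

theorem rep_simple (i : I) (v : I →₀ ℝ) : rep cs (cs.simple i) v = v - co M i v • al i := by
  rw [rep, lift_apply_simple, refl_apply]

theorem rep_mul (g h : W) (v : I →₀ ℝ) : rep cs (g * h) v = rep cs g (rep cs h v) := by
  rw [map_mul, Module.End.mul_apply]

theorem rep_one (v : I →₀ ℝ) : rep cs 1 v = v := by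
  rw [map_one, Module.End.one_apply]

theorem rep_inv_rep (g : W) (v : I →₀ ℝ) : rep cs g⁻¹ (rep cs g v) = v := by
  rw [← rep_mul, inv_mul_cancel, rep_one]

theorem rep_rep_inv (g : W) (v : I →₀ ℝ) : rep cs g (rep cs g⁻¹ v) = v := by
  rw [← rep_mul, mul_inv_cancel, rep_one]

theorem rep_injective (g : W) {u v : I →₀ ℝ} (h : rep cs g u = rep cs g v) : u = v := by
  rw [← rep_inv_rep cs g u, h, rep_inv_rep]

theorem rep_simple_self (i : I) : rep cs (cs.simple i) (al i) = - al i := by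
  rw [rep_simple, co_self]; module

/-- Twice Tits' invariant bilinear form: the one with `bf M (al i) (al i) = 2`. -/
noncomputable def bf (M : CoxeterMatrix I) : (I →₀ ℝ) →ₗ[ℝ] (I →₀ ℝ) →ₗ[ℝ] ℝ :=
  Finsupp.linearCombination ℝ (fun i => co M i)

theorem bf_al_left (i : I) (v : I →₀ ℝ) : bf M (al i) v = co M i v := by
  simp [bf, al]

theorem bf_al_right (i : I) (v : I →₀ ℝ) : bf M v (al i) = co M i v := by
  induction v using Finsupp.induction_linear with
  | zero => simp
  | add f g hf hg => simp [hf, hg]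
  | single j c =>
    have : Finsupp.single j c = c • al j := by simp [al]
    rw [this]
    simp only [map_smul, LinearMap.smul_apply, bf_al_left, co_symm M i j]

theorem bf_rep (g : W) (u v : I →₀ ℝ) : bf M (rep cs g u) (rep cs g v) = bf M u v := by
  induction g using cs.simple_induction_left generalizing u v with
  | one => simp
  | mul_simple_left w i ih =>
    rw [rep_mul, rep_mul, ← ih u v, rep_simple, rep_simple]
    simp only [map_sub, map_smul, LinearMap.sub_apply, LinearMap.smul_apply, bf_al_left,
      bf_al_right, co_self, smul_eq_mul]
    ring

end Rep

end COdd

/-! ### Roots and positivity -/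

namespace COdd

open CoxeterSystem

section Positivity

/-- The coefficient `sin (kθ) / sin θ` with `θ = π / m`, and its limit `k` for `θ → 0` when `m = 0`
stands for `∞`. -/
noncomputable def uf (m k : ℕ) : ℝ :=
  if m = 0 then k else Real.sin (k * (Real.pi / m)) / Real.sin (Real.pi / m)

theorem sin_pi_div_pos {m : ℕ} (h0 : m ≠ 0) (h1 : m ≠ 1) : 0 < Real.sin (Real.pi / m) := by
  have hm2 : 2 ≤ m := by omega
  have hmR : (2 : ℝ) ≤ m := by exact_mod_cast hm2
  refine Real.sin_pos_of_pos_of_lt_pi (by positivity) ?_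
  rw [div_lt_iff₀ (by linarith)]
  nlinarith [Real.pi_pos]

theorem uf_zero (m : ℕ) : uf m 0 = 0 := by simp [uf]

theorem uf_one {m : ℕ} (h1 : m ≠ 1) : uf m 1 = 1 := by
  unfold uf
  split_ifs with h0
  · simp
  · have := (sin_pi_div_pos h0 h1).ne'
    simp [this]

theorem uf_rec {m : ℕ} (h1 : m ≠ 1) (k : ℕ) :
    uf m (k + 2) = 2 * Real.cos (Real.pi / m) * uf m (k + 1) - uf m k := by
  unfold uf
  split_ifs with h0
  · subst h0; push_cast; simp; ring
  · have := (sin_pi_div_pos h0 h1).ne'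
    have e1 : ((k + 2 : ℕ) : ℝ) * (Real.pi / m) = k * (Real.pi / m) + 2 * (Real.pi / m) := by
      push_cast; ring
    have e2 : ((k + 1 : ℕ) : ℝ) * (Real.pi / m) = k * (Real.pi / m) + (Real.pi / m) := by
      push_cast; ring
    rw [e1, e2, Real.sin_add, Real.sin_add, Real.sin_two_mul, Real.cos_two_mul]
    field_simp
    ring

theorem uf_nonneg {m k : ℕ} (h1 : m ≠ 1) (h : m = 0 ∨ k ≤ m) : 0 ≤ uf m k := by
  unfold uf
  split_ifs with h0
  · positivity
  · have hs := sin_pi_div_pos h0 h1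
    have hk : k ≤ m := by tauto
    have hkR : (k : ℝ) ≤ m := by exact_mod_cast hk
    have hm : (0 : ℝ) < m := by positivity
    refine div_nonneg (Real.sin_nonneg_of_nonneg_of_le_pi (by positivity) ?_) hs.le
    rw [mul_div_assoc', div_le_iff₀ hm]
    nlinarith [Real.pi_pos]

variable {I : Type*} {M : CoxeterMatrix I} (cs : CoxeterSystem M W)

/-- The action of an alternating word of length `k` in `i`, `j`, with last letter `j`, on the simple
root of `i`. -/
theorem rep_alt {i j : I} (hij : i ≠ j) (k : ℕ) :
    rep cs (cs.wordProd (alternatingWord i j k)) (al i) =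
      if Even k then uf (M i j) (k + 1) • al i + uf (M i j) k • al j
      else uf (M i j) k • al i + uf (M i j) (k + 1) • al j := by
  have h1 := M.off_diagonal i j hij
  induction k with
  | zero => simp [alternatingWord, uf_zero, uf_one h1]
  | succ k ih =>
    have hc : co M i (al j) = -2 * Real.cos (Real.pi / M i j) := co_al M i j
    have hc' : co M j (al i) = -2 * Real.cos (Real.pi / M i j) := by rw [co_symm, hc]
    rw [alternatingWord_succ', wordProd_cons, rep_mul, ih]
    have hr := uf_rec h1 k
    by_cases hk : Even k
    · have hk' : ¬ Even (k + 1) := by simp [hk, parity_simps]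
      simp only [hk, hk', if_true, if_false, rep_simple, map_add, map_smul, co_self, hc', hr,
        show k + 1 + 1 = k + 2 from rfl]
      module
    · have hk' : Even (k + 1) := by simpa [parity_simps] using hk
      simp only [hk, hk', if_true, if_false, rep_simple, map_add, map_smul, co_self, hc, hr,
        show k + 1 + 1 = k + 2 from rfl]
      module

/-- The fundamental positivity property of the geometric representation: `w` sends the simple root
of `i` to a positive vector unless `w s_i` is shorter than `w`. By induction on the length,
it reduces to the dihedral subgroup of `i` and a right descent `j` of `w`. -/
theorem nonneg_of_not_descent (w : W) (i : I) (hi : ¬ cs.IsRightDescent w i) :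
    0 ≤ rep cs w (al i) := by
  induction hn : cs.length w using Nat.strong_induction_on generalizing w i with
  | _ n ih =>
  by_cases hw : w = 1
  · subst hw
    rw [rep_one]
    simp [al]
  obtain ⟨j, hj⟩ := cs.exists_rightDescent_of_ne_one hw
  have hij : i ≠ j := fun h => hi (h ▸ hj)
  have h1 := M.off_diagonal i j hij
  -- `w = v * u` with `u` the longest possible suffix alternating in `i` and `j` and ending in `j`
  let P : ℕ → Prop := fun k => k ≤ n ∧ ∃ v, w = v * cs.wordProd (alternatingWord i j k) ∧
    cs.length v + k = n
  have hP1 : P 1 := by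
    have hl := (cs.isRightDescent_iff).1 hj
    refine ⟨by omega, w * cs.simple j, ?_, by omega⟩
    simp [alternatingWord]
  have hPb : ∀ k, P k → k ≤ n := fun k hk => hk.1
  obtain ⟨k, hPk, hkmax⟩ : ∃ k, P k ∧ ∀ l, P l → l ≤ k := by
    classical
    refine ⟨Nat.findGreatest P n, Nat.findGreatest_spec (hPb 1 hP1) hP1, fun l hl =>
      Nat.le_findGreatest (hPb l hl) hl⟩
  have hk1 : 1 ≤ k := hkmax 1 hP1
  obtain ⟨-, v, hwv, hlen⟩ := hPk
  have hlw : cs.length w = n := hn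
  -- maximality makes `v` minimal in its coset modulo the dihedral subgroup of `i` and `j`
  have hv : ∀ l, l = i ∨ l = j → ¬ cs.IsRightDescent v l := by
    intro l hl hd
    have hd' := (cs.isRightDescent_iff).1 hd
    obtain ⟨k, rfl⟩ : ∃ k', k = k' + 1 := ⟨k - 1, by omega⟩
    by_cases hlp : l = if Even k then j else i
    · have e : w = (v * cs.simple l) * cs.wordProd (alternatingWord i j k) := by
        rw [hwv, alternatingWord_succ', wordProd_cons, ← hlp, mul_assoc]
      have := cs.length_mul_le (v * cs.simple l) (cs.wordProd (alternatingWord i j k))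
      have h2 := cs.length_wordProd_le (alternatingWord i j k)
      rw [length_alternatingWord] at h2
      rw [← e] at this
      omega
    · have hlp' : l = if Even (k + 1) then j else i := by
        by_cases hk : Even k
        · simp [hk, parity_simps] at hlp ⊢
          tauto
        · have : Even (k + 1) := by simpa [parity_simps] using hk
          simp only [hk, this, if_true, if_false] at hlp ⊢
          tauto
      have : P (k + 2) := by
        refine ⟨by omega, v * cs.simple l, ?_, by omega⟩
        rw [alternatingWord_succ', wordProd_cons, ← hlp', hwv]
        simp [mul_assoc]
      have := hkmax _ this
      omega
  -- otherwise `w s_i` is shorter than `w`: alternating words longer than `M i j` are not reduced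
  have hkm : M i j = 0 ∨ k + 1 ≤ M i j := by
    by_contra! hcon
    have hred := cs.not_isReduced_alternatingWord j i (m := k + 1)
      (by rw [M.symmetric]; exact hcon.1) (by rw [M.symmetric]; exact hcon.2)
    apply hred
    have hnd := (cs.not_isRightDescent_iff).1 hi
    have e : w * cs.simple i = v * cs.wordProd (alternatingWord j i (k + 1)) := by
      rw [hwv, alternatingWord_succ, wordProd_concat, mul_assoc]
    have h2 := cs.length_mul_le v (cs.wordProd (alternatingWord j i (k + 1)))
    rw [← e] at h2
    have h3 := cs.length_wordProd_le (alternatingWord j i (k + 1))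
    rw [length_alternatingWord] at h3
    unfold CoxeterSystem.IsReduced
    rw [length_alternatingWord]
    omega
  have hvi := ih (cs.length v) (by omega) v i (hv i (Or.inl rfl)) rfl
  have hvj := ih (cs.length v) (by omega) v j (hv j (Or.inr rfl)) rfl
  have hu1 : 0 ≤ uf (M i j) (k + 1) := uf_nonneg h1 hkm
  have hu0 : 0 ≤ uf (M i j) k := uf_nonneg h1 (by omega)
  rw [hwv, rep_mul, rep_alt cs hij]
  split_ifs
  · rw [map_add, map_smul, map_smul]
    exact add_nonneg (smul_nonneg hu1 hvi) (smul_nonneg hu0 hvj)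
  · rw [map_add, map_smul, map_smul]
    exact add_nonneg (smul_nonneg hu0 hvi) (smul_nonneg hu1 hvj)

theorem nonpos_of_descent (w : W) (i : I) (hi : cs.IsRightDescent w i) :
    rep cs w (al i) ≤ 0 := by
  have := nonneg_of_not_descent cs (w * cs.simple i) i
    ((cs.isRightDescent_iff_not_isRightDescent_mul).1 hi)
  rw [rep_mul, rep_simple_self, map_neg] at this
  simpa using this

theorem al_ne_zero (i : I) : (al i : I →₀ ℝ) ≠ 0 := by simp [al]

/-- A root of the geometric representation: an image of a simple root under the group. -/
def IsRoot (v : I →₀ ℝ) : Prop := ∃ (w : W) (i : I), v = rep cs w (al i)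

theorem isRoot_al (i : I) : IsRoot cs (al i) := ⟨1, i, by rw [rep_one]⟩

variable {cs}

theorem IsRoot.rep {v : I →₀ ℝ} (h : IsRoot cs v) (g : W) : IsRoot cs (rep cs g v) := by
  obtain ⟨w, i, rfl⟩ := h
  exact ⟨g * w, i, by rw [rep_mul]⟩

theorem IsRoot.neg {v : I →₀ ℝ} (h : IsRoot cs v) : IsRoot cs (-v) := by
  obtain ⟨w, i, rfl⟩ := h
  exact ⟨w * cs.simple i, i, by rw [rep_mul, rep_simple_self, map_neg]⟩

theorem IsRoot.ne_zero {v : I →₀ ℝ} (h : IsRoot cs v) : v ≠ 0 := by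
  obtain ⟨w, i, rfl⟩ := h
  intro h0
  exact al_ne_zero i (rep_injective cs w (by rw [h0, map_zero]))

theorem IsRoot.nonneg_or {v : I →₀ ℝ} (h : IsRoot cs v) : 0 ≤ v ∨ v ≤ 0 := by
  obtain ⟨w, i, rfl⟩ := h
  by_cases hd : cs.IsRightDescent w i
  · exact Or.inr (nonpos_of_descent cs w i hd)
  · exact Or.inl (nonneg_of_not_descent cs w i hd)

theorem IsRoot.bf_self {v : I →₀ ℝ} (h : IsRoot cs v) : bf M v v = 2 := by
  obtain ⟨w, i, rfl⟩ := h
  rw [bf_rep, bf_al_left, co_self]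

/-- A positive root different from the simple root `al i` stays positive under the simple
reflection `i`, because only its coefficient at `i` changes. -/
theorem IsRoot.simple_nonneg {v : I →₀ ℝ} (h : IsRoot cs v) (hv : 0 ≤ v) {i : I}
    (hi : v ≠ al i) : 0 ≤ COdd.rep cs (cs.simple i) v := by
  rcases (h.rep (cs.simple i)).nonneg_or with h1 | h1
  · exact h1
  exfalso
  have hz : ∀ j, j ≠ i → v j = 0 := by
    intro j hj
    have h2 := h1 j
    rw [rep_simple] at h2
    have h3 := hv j
    simp [al, hj.symm] at h2 h3
    linarith
  have hv' : v = v i • al i := by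
    ext j
    by_cases hj : j = i
    · subst hj; simp [al]
    · simp [al, hz j hj, Ne.symm hj]
  have hb := h.bf_self
  have hi0 : 0 ≤ v i := hv i
  rw [hv'] at hb
  simp only [map_smul, LinearMap.smul_apply, bf_al_left, co_self, smul_eq_mul] at hb
  have : v i = 1 := by nlinarith
  rw [this, one_smul] at hv'
  exact hi hv'

end Positivity

end COdd

/-! ### Parabolic subgroups, finite subgroups and normalizers -/

namespace COdd

open CoxeterSystem

section Parabolic

variable {I : Type*} {M : CoxeterMatrix I} (cs : CoxeterSystem M W)

/-- The standard parabolic (visual) subgroup generated by the simple reflections in `J`. -/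
def par (J : Set I) : Subgroup W := Subgroup.closure (cs.simple '' J)

variable {cs}

theorem simple_mem_par {J : Set I} {i : I} (hi : i ∈ J) : cs.simple i ∈ par cs J :=
  Subgroup.subset_closure ⟨i, hi, rfl⟩

/-- Elements of a parabolic subgroup `par cs J` only change the coordinates indexed by `J`. -/
theorem rep_apply_of_notMem {J : Set I} {g : W} (hg : g ∈ par cs J) (v : I →₀ ℝ) {k : I}
    (hk : k ∉ J) : rep cs g v k = v k := by
  induction hg using Subgroup.closure_induction generalizing v with
  | mem x hx =>
    obtain ⟨i, hi, rfl⟩ := hx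
    have : i ≠ k := fun h => hk (h ▸ hi)
    simp [rep_simple, al, this]
  | one => rw [rep_one]
  | mul x y _ _ hx hy => rw [rep_mul, hx, hy]
  | inv x _ hx =>
    have := hx (rep cs x⁻¹ v)
    rw [rep_rep_inv] at this
    exact this.symm

theorem rep_mem_supported {J : Set I} {g : W} (hg : g ∈ par cs J) {v : I →₀ ℝ}
    (hv : v ∈ Finsupp.supported ℝ ℝ J) : rep cs g v ∈ Finsupp.supported ℝ ℝ J := by
  rw [Finsupp.mem_supported'] at hv ⊢
  intro k hk
  rw [rep_apply_of_notMem hg v hk, hv k hk]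

theorem al_mem_supported {J : Set I} {i : I} (hi : i ∈ J) :
    (al i : I →₀ ℝ) ∈ Finsupp.supported ℝ ℝ J :=
  Finsupp.single_mem_supported ℝ 1 hi

/-- Linear maps agreeing on the simple roots in `J` agree on all vectors supported in `J`. -/
theorem ext_supported {V : Type*} [AddCommGroup V] [Module ℝ V] {J : Set I}
    {f f' : (I →₀ ℝ) →ₗ[ℝ] V} (h : ∀ j ∈ J, f (al j) = f' (al j)) {v : I →₀ ℝ}
    (hv : v ∈ Finsupp.supported ℝ ℝ J) : f v = f' v := by
  rw [Finsupp.supported_eq_span_single] at hv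
  refine LinearMap.eqOn_span (f := f) (g := f') ?_ hv
  rintro _ ⟨j, hj, rfl⟩
  exact h j hj

theorem eq_zero_of_nonneg_nonpos {v : I →₀ ℝ} (h : 0 ≤ v) (h' : v ≤ 0) : v = 0 :=
  le_antisymm h' h

/-- The geometric representation of a parabolic subgroup on its own simple roots is faithful. -/
theorem eq_one_of_fix {J : Set I} {g : W} (hg : g ∈ par cs J)
    (h : ∀ j ∈ J, rep cs g (al j) = al j) : g = 1 := by
  by_contra hne
  obtain ⟨i, hi⟩ := cs.exists_rightDescent_of_ne_one hne
  have hn := nonpos_of_descent cs g i hi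
  by_cases hiJ : i ∈ J
  · rw [h i hiJ] at hn
    have := hn i
    simp [al] at this
    linarith
  · have := hn i
    rw [rep_apply_of_notMem hg _ hiJ] at this
    simp [al] at this
    linarith

theorem par_ext {J : Set I} {g h : W} (hg : g ∈ par cs J) (hh : h ∈ par cs J)
    (e : ∀ j ∈ J, rep cs g (al j) = rep cs h (al j)) : g = h := by
  have : h⁻¹ * g = 1 := by
    refine eq_one_of_fix (mul_mem (inv_mem hh) hg) fun j hj => ?_
    rw [rep_mul, e j hj, rep_inv_rep]
  exact (inv_mul_eq_one.1 this).symm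

variable (cs)

theorem simple_injective : Function.Injective cs.simple := by
  intro i j h
  by_contra hij
  have h1 := rep_simple_self cs i
  rw [h, rep_simple] at h1
  have := DFunLike.congr_fun h1 i
  simp [al, Ne.symm hij] at this
  linarith

/-- Two simple reflections with `M i j = ∞` do not lie in a common finite subgroup: the
product acts on the plane of the two simple roots as a nontrivial unipotent. -/
theorem M_ne_zero_of_finite {F : Subgroup W} (hF : (F : Set W).Finite) {i j : I}
    (hi : cs.simple i ∈ F) (hj : cs.simple j ∈ F) : M i j ≠ 0 := by
  intro h0
  have hij : i ≠ j := by
    rintro rfl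
    rw [M.diagonal] at h0
    exact one_ne_zero h0
  have hc : co M i (al j) = -2 := by simp [co_al, h0]
  have hc' : co M j (al i) = -2 := by rw [co_symm, hc]
  have key : ∀ n : ℕ, rep cs ((cs.simple i * cs.simple j) ^ n) (al i) =
      al i + (2 * n : ℝ) • (al i + al j) := by
    intro n
    induction n with
    | zero => simp
    | succ n ih =>
      rw [pow_succ', rep_mul, ih, rep_mul]
      simp only [rep_simple, map_add, map_sub, map_smul, co_self, hc, hc']
      push_cast
      module
  have : Finite F := hF
  have hfo := isOfFinOrder_of_finite (⟨_, mul_mem hi hj⟩ : F)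
  obtain ⟨n, hn, hn1⟩ := (isOfFinOrder_iff_pow_eq_one).1 hfo
  have hn2 : (cs.simple i * cs.simple j) ^ n = 1 := by simpa using congrArg Subtype.val hn1
  have := key n
  rw [hn2, rep_one] at this
  have := DFunLike.congr_fun this j
  simp [al, hij] at this
  omega

/-- The inversion set of `g`: the positive roots made negative by `g`. -/
def inv (g : W) : Set (I →₀ ℝ) := {v | IsRoot cs v ∧ 0 ≤ v ∧ rep cs g v ≤ 0}

theorem inv_finite (g : W) : (inv cs g).Finite := by
  induction g using cs.simple_induction_right with
  | one =>
    refine Set.Finite.subset Set.finite_empty fun v hv => ?_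
    obtain ⟨h1, h2, h3⟩ := hv
    rw [rep_one] at h3
    exact h1.ne_zero (eq_zero_of_nonneg_nonpos h2 h3)
  | mul_simple_right w i ih =>
    refine ((ih.image (rep cs (cs.simple i))).union (Set.finite_singleton (al i))).subset ?_
    rintro v ⟨h1, h2, h3⟩
    by_cases hv : v = al i
    · exact Or.inr hv
    · refine Or.inl ⟨rep cs (cs.simple i) v, ⟨h1.rep _, h1.simple_nonneg h2 hv, ?_⟩, ?_⟩
      · rwa [← rep_mul]
      · rw [← rep_mul, simple_mul_simple_self, rep_one]

theorem eq_one_of_inv {g : W} (h : inv cs g = ∅) : g = 1 := by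
  by_contra hne
  obtain ⟨i, hi⟩ := cs.exists_rightDescent_of_ne_one hne
  have : al i ∈ inv cs g :=
    ⟨isRoot_al cs i, by simp [al], nonpos_of_descent cs g i hi⟩
  rw [h] at this
  exact this

/-- Inversion sets determine group elements: a positive root inverted by `g * h⁻¹` would separate
the inversion sets of `g` and `h`. -/
theorem inv_injective : Function.Injective (inv cs) := by
  intro g h e
  have : g * h⁻¹ = 1 := by
    refine eq_one_of_inv cs (Set.eq_empty_of_forall_notMem ?_)
    rintro v ⟨h1, h2, h3⟩
    rw [rep_mul] at h3
    have hr := h1.rep h⁻¹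
    have hback := rep_rep_inv cs h v
    rcases hr.nonneg_or with hp | hp
    · have : rep cs h⁻¹ v ∈ inv cs h := e ▸ ⟨hr, hp, h3⟩
      have h4 := this.2.2
      rw [hback] at h4
      exact h1.ne_zero (eq_zero_of_nonneg_nonpos h2 h4)
    · have hm : - rep cs h⁻¹ v ∈ inv cs g := by
        rw [e]
        refine ⟨hr.neg, neg_nonneg.2 hp, ?_⟩
        rw [map_neg, hback]
        exact neg_nonpos.2 h2
      have h4 := hm.2.2
      rw [map_neg] at h4
      exact (hr.rep g).ne_zero (eq_zero_of_nonneg_nonpos (neg_nonpos.1 h4) h3)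
  exact mul_inv_eq_one.1 this

/-- Only finitely many group elements have their inversion set inside a given finite set. -/
theorem finite_of_inv_subset {E : Set (I →₀ ℝ)} (hE : E.Finite) :
    {g : W | inv cs g ⊆ E}.Finite :=
  hE.finite_subsets.preimage ((inv_injective cs).injOn)

end Parabolic

section Dominance

variable {I : Type*} {M : CoxeterMatrix I} (cs : CoxeterSystem M W)

/-- The sum of the coefficients of a vector in the basis of simple roots. -/
noncomputable def ht : (I →₀ ℝ) →ₗ[ℝ] ℝ := Finsupp.linearCombination ℝ (fun _ => (1 : ℝ))

theorem linear_nonneg {x : (I →₀ ℝ) →ₗ[ℝ] ℝ} (hx : ∀ i, 0 ≤ x (al i)) {v : I →₀ ℝ}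
    (hv : 0 ≤ v) : 0 ≤ x v := by
  have e : v = ∑ i ∈ v.support, v i • al i := by
    conv_lhs => rw [← Finsupp.sum_single v]
    simp [Finsupp.sum, al]
  rw [e, map_sum]
  refine Finset.sum_nonneg fun i _ => ?_
  rw [map_smul, smul_eq_mul]
  exact mul_nonneg (hv i) (hx i)

theorem ht_nonneg {v : I →₀ ℝ} (hv : 0 ≤ v) : 0 ≤ ht v :=
  linear_nonneg (fun i => by simp [ht, al]) hv

theorem ht_pos {v : I →₀ ℝ} (hv : 0 ≤ v) (h0 : v ≠ 0) : 0 < ht v := by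
  rw [ht, Finsupp.linearCombination_apply, Finsupp.sum]
  refine Finset.sum_pos (fun i hi => ?_) (Finsupp.support_nonempty_iff.2 h0)
  have := (hv i).lt_of_ne' (Finsupp.mem_support_iff.1 hi)
  simpa using this

/-- The positive roots on which the linear form `x` is not positive. -/
def badRoots (x : (I →₀ ℝ) →ₗ[ℝ] ℝ) : Set (I →₀ ℝ) := {v | IsRoot cs v ∧ 0 ≤ v ∧ x v ≤ 0}

/-- The positive roots on which the linear form `x` is negative. -/
def negRoots (x : (I →₀ ℝ) →ₗ[ℝ] ℝ) : Set (I →₀ ℝ) := {v | IsRoot cs v ∧ 0 ≤ v ∧ x v < 0}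

/-- A linear form which is positive on all but finitely many positive roots (that is, an
interior point of the Tits cone) has a finite stabilizer. One reflects such a form into the
dominant chamber, where inversions of stabilizing elements vanish on the form. -/
theorem stabilizer_finite (x : (I →₀ ℝ) →ₗ[ℝ] ℝ) (hx : (badRoots cs x).Finite) :
    {g : W | ∀ v, x (rep cs g v) = x v}.Finite := by
  induction hn : (negRoots cs x).ncard using Nat.strong_induction_on generalizing x with
  | _ n ih =>
  by_cases hdom : ∀ i, 0 ≤ x (al i)
  · refine (finite_of_inv_subset cs hx).subset ?_
    rintro g hg v ⟨h1, h2, h3⟩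
    refine ⟨h1, h2, ?_⟩
    have := linear_nonneg hdom (neg_nonneg.2 h3)
    rw [map_neg, hg v] at this
    linarith
  · push Not at hdom
    obtain ⟨i, hi⟩ := hdom
    set s := cs.simple i with hs
    have hss : ∀ v, rep cs s (rep cs s v) = v := fun v => by
      rw [← rep_mul, hs, simple_mul_simple_self, rep_one]
    have hnegfin : (negRoots cs x).Finite := hx.subset fun v hv => ⟨hv.1, hv.2.1, hv.2.2.le⟩
    set x' : (I →₀ ℝ) →ₗ[ℝ] ℝ := x.comp (rep cs s) with hx'
    have hbad : (badRoots cs x').Finite := by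
      refine ((hx.image (rep cs s)).union (Set.finite_singleton (al i))).subset ?_
      rintro v ⟨h1, h2, h3⟩
      by_cases hv : v = al i
      · exact Or.inr hv
      · exact Or.inl ⟨rep cs s v, ⟨h1.rep s, h1.simple_nonneg h2 hv, h3⟩, hss v⟩
    have hmem : al i ∈ negRoots cs x := ⟨isRoot_al cs i, by simp [al], hi⟩
    have hlt : (negRoots cs x').ncard < n := by
      have hsub : negRoots cs x' ⊆ (rep cs s) '' (negRoots cs x \ {al i}) := by
        rintro v ⟨h1, h2, h3⟩
        have hv : v ≠ al i := by
          rintro rfl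
          rw [hx', LinearMap.comp_apply, hs, rep_simple_self, map_neg] at h3
          linarith
        refine ⟨rep cs s v, ⟨⟨h1.rep s, h1.simple_nonneg h2 hv, h3⟩, ?_⟩, hss v⟩
        intro h4
        have h5 : v = - al i := by
          rw [← hss v, h4, hs, rep_simple_self]
        have := h2 i
        rw [h5] at this
        simp [al] at this
        linarith
      calc (negRoots cs x').ncard ≤ ((rep cs s) '' (negRoots cs x \ {al i})).ncard :=
            Set.ncard_le_ncard hsub ((hnegfin.sdiff).image _)
        _ ≤ (negRoots cs x \ {al i}).ncard := Set.ncard_image_le hnegfin.sdiff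
        _ < (negRoots cs x).ncard := Set.ncard_sdiff_singleton_lt_of_mem hmem hnegfin
        _ = n := hn
    have hfin := ih _ hlt x' hbad rfl
    refine (hfin.preimage (f := fun g => s * g * s) ?_).subset ?_
    · intro g _ h _ e
      simpa using e
    · intro g hg v
      simp only [hx', LinearMap.comp_apply, rep_mul, hss, hg _]

/-- Every finite subgroup fixes a linear form whose stabilizer is finite. -/
theorem exists_invariant {F : Subgroup W} (hF : (F : Set W).Finite) :
    ∃ x : (I →₀ ℝ) →ₗ[ℝ] ℝ, (∀ f ∈ F, ∀ v, x (rep cs f v) = x v) ∧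
      {g : W | ∀ v, x (rep cs g v) = x v}.Finite := by
  -- the average of a dominant form; it is positive on the positive roots that no `f ∈ F` inverts
  let x : (I →₀ ℝ) →ₗ[ℝ] ℝ := ∑ f ∈ hF.toFinset, ht.comp (rep cs f)
  have hxa : ∀ v, x v = ∑ f ∈ hF.toFinset, ht (rep cs f v) := fun v => by
    simp [x, LinearMap.sum_apply]
  refine ⟨x, ?_, stabilizer_finite cs x ?_⟩
  · intro f hf v
    rw [hxa, hxa]
    refine Finset.sum_bij (fun g _ => g * f) ?_ ?_ ?_ ?_
    · intro g hg
      simp only [Set.Finite.mem_toFinset, SetLike.mem_coe] at hg ⊢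
      exact mul_mem hg hf
    · intro g _ h _ e
      simpa using e
    · intro g hg
      simp only [Set.Finite.mem_toFinset, SetLike.mem_coe] at hg
      exact ⟨g * f⁻¹, by simpa using mul_mem hg (inv_mem hf), by simp⟩
    · intro g _
      rw [rep_mul]
  · refine (hF.biUnion (t := fun f => inv cs f) fun f _ => inv_finite cs f).subset ?_
    rintro v ⟨h1, h2, h3⟩
    by_contra hcon
    simp only [SetLike.mem_coe, Set.mem_iUnion, exists_prop, not_exists, not_and] at hcon
    have hpos : ∀ f ∈ F, 0 < ht (rep cs f v) := by
      intro f hf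
      rcases (h1.rep f).nonneg_or with h4 | h4
      · exact ht_pos h4 (h1.rep f).ne_zero
      · exact absurd ⟨h1, h2, h4⟩ (hcon f hf)
    rw [hxa] at h3
    have : 0 < ∑ f ∈ hF.toFinset, ht (rep cs f v) :=
      Finset.sum_pos (fun f hf => hpos f (by simpa using hf)) ⟨1, by simp⟩
    linarith

end Dominance

section Normalizer

variable {I : Type*} {M : CoxeterMatrix I} (cs : CoxeterSystem M W)

/-- A shortest element of the coset `g * par cs J` sends the simple roots of `J` to positive
vectors. -/
theorem exists_minimal_coset (J : Set I) (g : W) :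
    ∃ h ∈ par cs J, ∀ j ∈ J, 0 ≤ rep cs (g * h) (al j) := by
  classical
  have hex : ∃ n, ∃ h ∈ par cs J, cs.length (g * h) = n := ⟨_, 1, one_mem _, rfl⟩
  obtain ⟨h, hh, hlen⟩ := Nat.find_spec hex
  refine ⟨h, hh, fun j hj => nonneg_of_not_descent cs _ j fun hd => ?_⟩
  have h1 := (cs.isRightDescent_iff).1 hd
  exact Nat.find_min hex (m := cs.length (g * h * cs.simple j)) (by omega)
    ⟨h * cs.simple j, mul_mem hh (simple_mem_par hj), by rw [mul_assoc]⟩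

/-- If `J` generates a finite parabolic subgroup and every `s ∉ J` for which `J ∪ {s}` still
generates a finite subgroup commutes with `J`, then an element preserving the span of the simple
roots in `J` and mapping these simple roots to positive vectors fixes each of them. -/
theorem normalizer_fix {J : Set I} (hJ : (par cs J : Set W).Finite)
    (hmax : ∀ s, s ∉ J → (par cs (insert s J) : Set W).Finite → ∀ t ∈ J, M s t = 2)
    (y : W) (hpos : ∀ t ∈ J, 0 ≤ rep cs y (al t))
    (hV : ∀ v, v ∈ Finsupp.supported ℝ ℝ J ↔ rep cs y v ∈ Finsupp.supported ℝ ℝ J) :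
    ∀ t ∈ J, rep cs y (al t) = al t := by
  induction hn : cs.length y using Nat.strong_induction_on generalizing y with
  | _ n ih =>
  by_cases hy : y = 1
  · subst hy
    intro t _
    rw [rep_one]
  obtain ⟨s, hs⟩ := cs.exists_rightDescent_of_ne_one hy
  have hneg := nonpos_of_descent cs y s hs
  have hsJ : s ∉ J := fun h => ((isRoot_al cs s).rep y).ne_zero
    (eq_zero_of_nonneg_nonpos (hpos s h) hneg)
  -- some coordinate of `y (al s)` outside `J` is negative
  obtain ⟨k, hkJ, hk⟩ : ∃ k, k ∉ J ∧ rep cs y (al s) k < 0 := by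
    by_contra! hcon
    have h1 : rep cs y (al s) ∈ Finsupp.supported ℝ ℝ J := by
      rw [Finsupp.mem_supported']
      intro k hk
      exact le_antisymm (hneg k) (hcon k hk)
    rw [← hV, Finsupp.mem_supported'] at h1
    have := h1 s hsJ
    simp [al] at this
  have hinv : ∀ v, IsRoot cs v → 0 ≤ v → v ∈ Finsupp.supported ℝ ℝ (insert s J) →
      v ∉ Finsupp.supported ℝ ℝ J → v ∈ inv cs y := by
    intro v h1 h2 h3 h4
    refine ⟨h1, h2, ?_⟩
    rw [Finsupp.mem_supported'] at h3
    have h5 : v - v s • al s ∈ Finsupp.supported ℝ ℝ J := by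
      rw [Finsupp.mem_supported']
      intro l hl
      by_cases hls : l = s
      · subst hls; simp [al]
      · have := h3 l (by simp [hls, hl])
        simp [al, this, Ne.symm hls]
    have h6 : 0 < v s := by
      refine (h2 s).lt_of_ne' fun h0 => h4 ?_
      rw [show v s = 0 from h0, zero_smul, sub_zero] at h5
      exact h5
    have h7 := (hV _).1 h5
    rw [Finsupp.mem_supported'] at h7
    have h8 := h7 k hkJ
    rw [map_sub, map_smul] at h8
    simp only [Finsupp.coe_sub, Pi.sub_apply, Finsupp.coe_smul, Pi.smul_apply, smul_eq_mul] at h8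
    rcases (h1.rep y).nonneg_or with h9 | h9
    · have h10 := h9 k
      simp only [Finsupp.coe_zero, Pi.zero_apply] at h10
      nlinarith [mul_pos_of_neg_of_neg hk (neg_neg_of_pos h6)]
    · exact h9
  -- each coset of `par cs J` in `par cs (insert s J)` has a representative whose inversions are
  -- positive roots supported in `insert s J` but not in `J`, hence lie in the finite set `inv cs y`
  have hfin : (par cs (insert s J) : Set W).Finite := by
    refine ((finite_of_inv_subset cs (inv_finite cs y)).mul hJ).subset ?_
    intro g hg
    obtain ⟨h, hh, hmin⟩ := exists_minimal_coset cs J g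
    refine ⟨g * h, ?_, h⁻¹, inv_mem hh, by simp⟩
    have hgh : g * h ∈ par cs (insert s J) :=
      mul_mem hg (Subgroup.closure_mono (Set.image_mono (Set.subset_insert s J)) hh)
    rintro v ⟨h1, h2, h3⟩
    refine hinv v h1 h2 ?_ ?_
    · rw [Finsupp.mem_supported']
      intro l hl
      refine le_antisymm ?_ (h2 l)
      rw [← rep_apply_of_notMem hgh v hl]
      exact h3 l
    · intro hvJ
      refine (h1.rep (g * h)).ne_zero (eq_zero_of_nonneg_nonpos ?_ h3)
      have e : v = ∑ i ∈ v.support, v i • al i := by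
        conv_lhs => rw [← Finsupp.sum_single v]
        simp [Finsupp.sum, al]
      rw [e, map_sum]
      refine Finset.sum_nonneg fun i hi => ?_
      rw [map_smul]
      exact smul_nonneg (h2 i) (hmin i (hvJ hi))
  -- so `s` commutes with `J`, fixes the span of the roots in `J`, and `y * s` is a shorter element
  -- with the same properties
  have hcomm := hmax s hsJ hfin
  have hco : ∀ t ∈ J, co M s (al t) = 0 := by
    intro t ht
    rw [co_al, hcomm t ht]
    simp
  have hcov : ∀ v ∈ Finsupp.supported ℝ ℝ J, rep cs (cs.simple s) v = v := by
    intro v hv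
    have : co M s v = (0 : (I →₀ ℝ) →ₗ[ℝ] ℝ) v := ext_supported (by simpa using hco) hv
    rw [rep_simple, this]
    simp
  have hlen := (cs.isRightDescent_iff).1 hs
  have hfix := ih (cs.length (y * cs.simple s)) (by omega) (y * cs.simple s) ?_ ?_ rfl
  · intro t ht
    have := hfix t ht
    rwa [rep_mul, hcov _ (al_mem_supported ht)] at this
  · intro t ht
    rw [rep_mul, hcov _ (al_mem_supported ht)]
    exact hpos t ht
  · intro v
    rw [rep_mul, ← hV]
    constructor
    · intro hv
      rwa [hcov v hv]
    · intro hv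
      have := hcov _ hv
      rw [← rep_mul, simple_mul_simple_self, rep_one] at this
      rwa [this]

end Normalizer

end COdd

/-! ### Signed permutations and the diagrams of types `C` and `D` -/

namespace COdd

open CoxeterSystem

section SignedPerm

/-- The words `F 0 = b₀ d`, `F (k+1) = b_{k+1} (F k) b_{k+1}` of a type-`D` system: `F k` is the
signed permutation changing the signs of the coordinates `0` and `k + 1`. -/
def flip (b : ℕ → W) (d : W) : ℕ → W
  | 0 => b 0 * d
  | k + 1 => b (k + 1) * flip b d k * b (k + 1)

/-- The product `F 0 ⋯ F (n-1)` of the sign changes `flip b d k`. -/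
def flips (b : ℕ → W) (d : W) : ℕ → W
  | 0 => 1
  | n + 1 => flips b d n * flip b d n

theorem map_flip {G : Type*} [Group G] (f : W →* G) (b : ℕ → W) (d : W) (k : ℕ) :
    f (flip b d k) = flip (fun j => f (b j)) (f d) k := by
  induction k with
  | zero => simp [flip]
  | succ k ih => simp [flip, ih]

theorem map_flips {G : Type*} [Group G] (f : W →* G) (b : ℕ → W) (d : W) (k : ℕ) :
    f (flips b d k) = flips (fun j => f (b j)) (f d) k := by
  induction k with
  | zero => simp [flips]
  | succ k ih => simp [flips, ih, map_flip]

variable {V : Type*} [AddCommGroup V] [Module ℝ V]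

/-- The elements `b k` (`k < N`) and `d` of the subgroup `P` act on the vectors `η 0, …, η N` as
the standard generators of the Weyl group of type `D`, and the action of `P` is determined by the
images of these vectors. -/
structure IsSignedPerm (ρ : W →* Module.End ℝ V) (P : Subgroup W) (b : ℕ → W) (d : W)
    (η : ℕ → V) (N : ℕ) : Prop where
  b_mem : ∀ k < N, b k ∈ P
  d_mem : d ∈ P
  b_left : ∀ k < N, ρ (b k) (η k) = η (k + 1)
  b_right : ∀ k < N, ρ (b k) (η (k + 1)) = η k
  b_fix : ∀ k < N, ∀ l ≤ N, l ≠ k → l ≠ k + 1 → ρ (b k) (η l) = η l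
  d_zero : ρ d (η 0) = - η 1
  d_one : ρ d (η 1) = - η 0
  d_fix : ∀ l ≤ N, 2 ≤ l → ρ d (η l) = η l
  faithful : ∀ g ∈ P, ∀ h ∈ P, (∀ l ≤ N, ρ g (η l) = ρ h (η l)) → g = h

namespace IsSignedPerm

variable {ρ : W →* Module.End ℝ V} {P : Subgroup W} {b : ℕ → W} {d : W} {η : ℕ → V} {N : ℕ}

theorem flip_mem (h : IsSignedPerm ρ P b d η N) {k : ℕ} (hk : k < N) : flip b d k ∈ P := by
  induction k with
  | zero => exact mul_mem (h.b_mem 0 hk) h.d_mem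
  | succ k ih => exact mul_mem (mul_mem (h.b_mem _ hk) (ih (by omega))) (h.b_mem _ hk)

theorem flips_mem (h : IsSignedPerm ρ P b d η N) {n : ℕ} (hn : n ≤ N) : flips b d n ∈ P := by
  induction n with
  | zero => exact one_mem _
  | succ n ih => exact mul_mem (ih (by omega)) (h.flip_mem hn)

theorem rho_flip (h : IsSignedPerm ρ P b d η N) {k : ℕ} (hk : k < N) :
    ρ (flip b d k) (η 0) = - η 0 ∧ ρ (flip b d k) (η (k + 1)) = - η (k + 1) ∧
      ∀ l ≤ N, l ≠ 0 → l ≠ k + 1 → ρ (flip b d k) (η l) = η l := by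
  induction k with
  | zero =>
    refine ⟨?_, ?_, fun l hl h0 h1 => ?_⟩
    · rw [flip, map_mul, Module.End.mul_apply, h.d_zero, map_neg, h.b_right 0 hk]
    · rw [flip, map_mul, Module.End.mul_apply, h.d_one, map_neg, h.b_left 0 hk]
    · rw [flip, map_mul, Module.End.mul_apply, h.d_fix l hl (by omega), h.b_fix 0 hk l hl h0 h1]
  | succ k ih =>
    obtain ⟨i0, i1, i2⟩ := ih (by omega)
    refine ⟨?_, ?_, fun l hl h0 h1 => ?_⟩
    · rw [flip, map_mul, map_mul, Module.End.mul_apply, Module.End.mul_apply,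
        h.b_fix (k + 1) hk 0 (by omega) (by omega) (by omega), i0, map_neg,
        h.b_fix (k + 1) hk 0 (by omega) (by omega) (by omega)]
    · rw [flip, map_mul, map_mul, Module.End.mul_apply, Module.End.mul_apply,
        h.b_right (k + 1) hk, i1, map_neg, h.b_left (k + 1) hk]
    · rw [flip, map_mul, map_mul, Module.End.mul_apply, Module.End.mul_apply]
      by_cases hlk : l = k + 1
      · subst hlk
        rw [h.b_left (k + 1) hk, i2 _ (by omega) (by omega) (by omega), h.b_right (k + 1) hk]
      · rw [h.b_fix (k + 1) hk l hl hlk h1, i2 l hl h0 hlk, h.b_fix (k + 1) hk l hl hlk h1]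

/-- `flips b d n` negates the coordinates `1, …, n`, and the coordinate `0` exactly `n` times. -/
theorem rho_flips_aux (h : IsSignedPerm ρ P b d η N) {n : ℕ} (hn : n ≤ N) :
    ρ (flips b d n) (η 0) = (-1 : ℝ) ^ n • η 0 ∧
      (∀ l, l ≠ 0 → l ≤ n → ρ (flips b d n) (η l) = - η l) ∧
      ∀ l ≤ N, n < l → ρ (flips b d n) (η l) = η l := by
  induction n with
  | zero =>
    refine ⟨by simp [flips], fun l h0 h1 => absurd (Nat.le_zero.1 h1) h0, fun l _ _ => ?_⟩
    simp [flips]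
  | succ n ih =>
    obtain ⟨i0, i1, i2⟩ := ih (by omega)
    obtain ⟨f0, f1, f2⟩ := h.rho_flip (k := n) hn
    refine ⟨?_, fun l h0 h1 => ?_, fun l hl h1 => ?_⟩
    · rw [flips, map_mul, Module.End.mul_apply, f0, map_neg, i0, pow_succ]
      module
    · rw [flips, map_mul, Module.End.mul_apply]
      by_cases hl : l = n + 1
      · subst hl
        rw [f1, map_neg, i2 _ hn (by omega)]
      · rw [f2 l (by omega) h0 hl, i1 l h0 (by omega)]
    · rw [flips, map_mul, Module.End.mul_apply, f2 l hl (by omega) (by omega), i2 l hl (by omega)]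

theorem rho_flips_zero (h : IsSignedPerm ρ P b d η N) (hN : Even N) :
    ρ (flips b d N) (η 0) = η 0 := by
  rw [(h.rho_flips_aux le_rfl).1, hN.neg_one_pow, one_smul]

theorem rho_flips (h : IsSignedPerm ρ P b d η N) {l : ℕ} (h0 : l ≠ 0) (hl : l ≤ N) :
    ρ (flips b d N) (η l) = - η l :=
  (h.rho_flips_aux le_rfl).2.1 l h0 hl

theorem flips_sq (h : IsSignedPerm ρ P b d η N) (hN : Even N) :
    flips b d N * flips b d N = 1 := by
  refine h.faithful _ (mul_mem (h.flips_mem le_rfl) (h.flips_mem le_rfl)) _ (one_mem _) ?_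
  intro l hl
  rw [map_mul, Module.End.mul_apply, map_one, Module.End.one_apply]
  by_cases h0 : l = 0
  · subst h0
    rw [h.rho_flips_zero hN, h.rho_flips_zero hN]
  · rw [h.rho_flips h0 hl, map_neg, h.rho_flips h0 hl, neg_neg]

theorem flips_b (h : IsSignedPerm ρ P b d η N) (hN : Even N) {k : ℕ} (h0 : k ≠ 0) (hk : k < N) :
    flips b d N * b k = b k * flips b d N := by
  refine h.faithful _ (mul_mem (h.flips_mem le_rfl) (h.b_mem k hk)) _
    (mul_mem (h.b_mem k hk) (h.flips_mem le_rfl)) fun l hl => ?_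
  rw [map_mul, Module.End.mul_apply, map_mul, Module.End.mul_apply]
  by_cases h1 : l = k
  · subst h1
    rw [h.b_left l hk, h.rho_flips h0 hl, map_neg, h.b_left l hk, h.rho_flips (by omega) hk]
  by_cases h2 : l = k + 1
  · subst h2
    rw [h.b_right k hk, h.rho_flips (by omega) hl, map_neg, h.b_right k hk,
      h.rho_flips h0 hk.le]
  rw [h.b_fix k hk l hl h1 h2]
  by_cases h3 : l = 0
  · subst h3
    rw [h.rho_flips_zero hN, h.b_fix k hk 0 hl h1 h2]
  · rw [h.rho_flips h3 hl, map_neg, h.b_fix k hk l hl h1 h2]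

/-- The sign changes `flips b d N` conjugate `b 0` to `d`: they fix the coordinate `0` and negate
the coordinate `1`. -/
theorem flips_b_zero (h : IsSignedPerm ρ P b d η N) (hN : Even N) (hk : 0 < N) :
    flips b d N * b 0 = d * flips b d N := by
  refine h.faithful _ (mul_mem (h.flips_mem le_rfl) (h.b_mem 0 hk)) _
    (mul_mem h.d_mem (h.flips_mem le_rfl)) fun l hl => ?_
  rw [map_mul, Module.End.mul_apply, map_mul, Module.End.mul_apply]
  by_cases h1 : l = 0
  · subst h1
    rw [h.b_left 0 hk, h.rho_flips_zero hN, h.d_zero, h.rho_flips (by omega) hk]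
  by_cases h2 : l = 1
  · subst h2
    rw [h.b_right 0 hk, h.rho_flips_zero hN, h.rho_flips (by omega) hl, map_neg, h.d_one, neg_neg]
  rw [h.b_fix 0 hk l hl h1 h2, h.rho_flips h1 hl, map_neg, h.d_fix l hl (by omega)]

end IsSignedPerm

end SignedPerm

section Types

variable {I : Type*} {M : CoxeterMatrix I} (cs : CoxeterSystem M W)

/-- The generators `b 0, …, b (N-1)` form a chain of type `A`. -/
structure IsChain (M : CoxeterMatrix I) (b : ℕ → I) (N : ℕ) : Prop where
  adj : ∀ k, k + 1 < N → M (b k) (b (k + 1)) = 3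
  far : ∀ k l, k + 1 < l → l < N → M (b k) (b l) = 2

/-- The generators `d, b 0, …, b (N-1)` form a diagram of type `D`, with branching at `b 1`:
Coxeter's `B_{N+1}`. -/
structure IsD (M : CoxeterMatrix I) (d : I) (b : ℕ → I) (N : ℕ) : Prop extends
    IsChain M b N where
  two_le : 2 ≤ N
  d_zero : M d (b 0) = 2
  d_one : M d (b 1) = 3
  d_far : ∀ k, 2 ≤ k → k < N → M d (b k) = 2

/-- The generators `a, b 0, …, b (N-1)` form a linear diagram of type `C_{N+1}`, where the edge
of `a` and `b 0` has label `4`. -/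
structure IsC (M : CoxeterMatrix I) (a : I) (b : ℕ → I) (N : ℕ) : Prop extends
    IsChain M b N where
  two_le : 2 ≤ N
  a_zero : M a (b 0) = 4
  a_far : ∀ k, k ≠ 0 → k < N → M a (b k) = 2

/-- The nodes `d, b 0, …, b (N-1)` of a diagram. -/
def nodes (d : I) (b : ℕ → I) (N : ℕ) : Set I := insert d (b '' Set.Iio N)

theorem mem_nodes_b {d : I} {b : ℕ → I} {N k : ℕ} (hk : k < N) : b k ∈ nodes d b N :=
  Or.inr ⟨k, hk, rfl⟩

theorem mem_nodes_d {d : I} {b : ℕ → I} {N : ℕ} : d ∈ nodes d b N := Or.inl rfl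

/-- The vectors `η 0 = e₀`, `η (l+1) = η l + al (b l)`: an orthogonal basis (up to scaling)
of the span of the simple roots of a diagram of type `C` or `D`. -/
noncomputable def eta (e₀ : I →₀ ℝ) (b : ℕ → I) : ℕ → (I →₀ ℝ)
  | 0 => e₀
  | l + 1 => eta e₀ b l + al (b l)

theorem co_chain {b : ℕ → I} {N : ℕ} (h : IsChain M b N) {k l : ℕ} (hk : k < N) (hl : l < N) :
    co M (b k) (al (b l)) =
      if l = k then 2 else if l = k + 1 ∨ k = l + 1 then -1 else 0 := by
  have h3 : Real.cos (Real.pi / 3) = 1 / 2 := Real.cos_pi_div_three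
  split_ifs with h1 h2
  · rw [h1, co_self]
  · rw [co_al]
    rcases h2 with rfl | rfl
    · rw [h.adj k hl]; push_cast; rw [h3]; norm_num
    · rw [M.symmetric, h.adj l hk]; push_cast; rw [h3]; norm_num
  · rw [co_al]
    have : M (b k) (b l) = 2 := by
      rcases lt_or_gt_of_ne h1 with h4 | h4
      · rw [M.symmetric]; exact h.far l k (by omega) hk
      · exact h.far k l (by omega) hl
    rw [this]
    simp

theorem co_eta {b : ℕ → I} {N : ℕ} (h : IsChain M b N) {e₀ : I →₀ ℝ}
    (h0 : ∀ k < N, co M (b k) e₀ = if k = 0 then -1 else 0) {k l : ℕ} (hk : k < N) (hl : l ≤ N) :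
    co M (b k) (eta e₀ b l) = if l = k then -1 else if l = k + 1 then 1 else 0 := by
  induction l with
  | zero =>
    rw [eta, h0 k hk]
    simp [eq_comm]
  | succ l ih =>
    rw [eta, map_add, ih (by omega), co_chain h hk hl]
    split_ifs <;> first | omega | norm_num

theorem rep_b_left {b : ℕ → I} {N : ℕ} (h : IsChain M b N) {e₀ : I →₀ ℝ}
    (h0 : ∀ k < N, co M (b k) e₀ = if k = 0 then -1 else 0) {k : ℕ} (hk : k < N) :
    rep cs (cs.simple (b k)) (eta e₀ b k) = eta e₀ b (k + 1) := by
  rw [rep_simple, co_eta h h0 hk hk.le, eta]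
  simp

theorem rep_b_right {b : ℕ → I} {N : ℕ} (h : IsChain M b N) {e₀ : I →₀ ℝ}
    (h0 : ∀ k < N, co M (b k) e₀ = if k = 0 then -1 else 0) {k : ℕ} (hk : k < N) :
    rep cs (cs.simple (b k)) (eta e₀ b (k + 1)) = eta e₀ b k := by
  rw [rep_simple, co_eta h h0 hk hk, eta]
  simp

theorem rep_b_fix {b : ℕ → I} {N : ℕ} (h : IsChain M b N) {e₀ : I →₀ ℝ}
    (h0 : ∀ k < N, co M (b k) e₀ = if k = 0 then -1 else 0) {k l : ℕ} (hk : k < N)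
    (hl : l ≤ N) (h1 : l ≠ k) (h2 : l ≠ k + 1) :
    rep cs (cs.simple (b k)) (eta e₀ b l) = eta e₀ b l := by
  rw [rep_simple, co_eta h h0 hk hl]
  simp [h1, h2]

/-- The base vector of `eta` in type `D`. -/
noncomputable def e0D (d : I) (b : ℕ → I) : I →₀ ℝ := (1 / 2 : ℝ) • (al d - al (b 0))

/-- The base vector of `eta` in type `C`. -/
noncomputable def e0C (a : I) : I →₀ ℝ := (Real.sqrt 2 / 2) • al a

theorem co_two {i j : I} (h : M i j = 2) : co M i (al j) = 0 := by
  rw [co_al, h]; simp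

theorem co_three {i j : I} (h : M i j = 3) : co M i (al j) = -1 := by
  rw [co_al, h]
  push_cast
  rw [Real.cos_pi_div_three]; norm_num

theorem co_four {i j : I} (h : M i j = 4) : co M i (al j) = -Real.sqrt 2 := by
  rw [co_al, h]
  push_cast
  rw [Real.cos_pi_div_four]; ring

theorem IsD.co_e0 {d : I} {b : ℕ → I} {N : ℕ} (h : IsD M d b N) {k : ℕ} (hk : k < N) :
    co M (b k) (e0D d b) = if k = 0 then -1 else 0 := by
  have hN := h.two_le
  rw [e0D, map_smul, map_sub, co_chain h.toIsChain hk (by omega), co_symm]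
  rcases Nat.lt_or_ge k 2 with h2 | h2
  · interval_cases k
    · rw [co_two h.d_zero]; norm_num
    · rw [co_three h.d_one]; norm_num
  · rw [co_two (h.d_far k h2 hk)]
    have h1 : ¬ (0 = k) := by omega
    have h2 : ¬ (0 = k + 1 ∨ k = 0 + 1) := by omega
    have h3 : ¬ (k = 0) := by omega
    rw [if_neg h1, if_neg h2, if_neg h3]
    simp

theorem IsD.co_d {d : I} {b : ℕ → I} {N : ℕ} (h : IsD M d b N) {l : ℕ} (hl : l ≤ N) :
    co M d (eta (e0D d b) b l) = if l < 2 then 1 else 0 := by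
  have hN := h.two_le
  induction l with
  | zero =>
    rw [eta, e0D, map_smul, map_sub, co_self, co_two h.d_zero]; norm_num
  | succ l ih =>
    rw [eta, map_add, ih (by omega)]
    rcases Nat.lt_or_ge l 2 with h2 | h2
    · interval_cases l
      · rw [co_two h.d_zero]; norm_num
      · rw [co_three h.d_one]; norm_num
    · rw [co_two (h.d_far l h2 hl)]
      have h1 : ¬ (l < 2) := by omega
      have h2 : ¬ (l + 1 < 2) := by omega
      simp [h1, h2]

theorem IsD.al_d {d : I} {b : ℕ → I} :
    (al d : I →₀ ℝ) = eta (e0D d b) b 0 + eta (e0D d b) b 1 := by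
  simp only [eta, e0D]
  module

theorem al_b {e₀ : I →₀ ℝ} {b : ℕ → I} (k : ℕ) :
    (al (b k) : I →₀ ℝ) = eta e₀ b (k + 1) - eta e₀ b k := by
  rw [eta]; abel

theorem simple_mem_nodes {d : I} {b : ℕ → I} {N k : ℕ} (hk : k < N) :
    cs.simple (b k) ∈ par cs (nodes d b N) := simple_mem_par (mem_nodes_b hk)

/-- The simple reflections of a diagram of type `D` are signed permutations of the `η`. -/
theorem IsD.isSignedPerm {d : I} {b : ℕ → I} {N : ℕ} (h : IsD M d b N) :
    IsSignedPerm (rep cs) (par cs (nodes d b N)) (fun k => cs.simple (b k)) (cs.simple d)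
      (eta (e0D d b) b) N where
  b_mem k hk := simple_mem_nodes cs hk
  d_mem := simple_mem_par mem_nodes_d
  b_left k hk := rep_b_left cs h.toIsChain (fun _ => h.co_e0) hk
  b_right k hk := rep_b_right cs h.toIsChain (fun _ => h.co_e0) hk
  b_fix k hk l hl h1 h2 := rep_b_fix cs h.toIsChain (fun _ => h.co_e0) hk hl h1 h2
  d_zero := by
    rw [rep_simple, h.co_d (by omega), IsD.al_d (b := b)]
    simp
  d_one := by
    have := h.two_le
    rw [rep_simple, h.co_d (by omega), IsD.al_d (b := b)]
    simp
  d_fix l hl h2 := by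
    rw [rep_simple, h.co_d hl]
    simp [not_lt.2 h2]
  faithful g hg g' hg' e := by
    have hN := h.two_le
    refine par_ext hg hg' ?_
    rintro _ (rfl | ⟨k, hk, rfl⟩)
    · rw [IsD.al_d (b := b), map_add, map_add, e 0 (by omega), e 1 (by omega)]
    · rw [al_b (e₀ := e0D d b) k, map_sub, map_sub, e k (le_of_lt hk), e (k + 1) hk]

theorem IsC.co_e0 {a : I} {b : ℕ → I} {N : ℕ} (h : IsC M a b N) {k : ℕ} (hk : k < N) :
    co M (b k) (e0C a) = if k = 0 then -1 else 0 := by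
  rw [e0C, map_smul, co_symm]
  split_ifs with h0
  · rw [h0, co_four h.a_zero, smul_eq_mul]
    have := Real.mul_self_sqrt (show (0 : ℝ) ≤ 2 by norm_num)
    linarith
  · rw [co_two (h.a_far k h0 hk), smul_zero]

theorem IsC.co_a {a : I} {b : ℕ → I} {N : ℕ} (h : IsC M a b N) {l : ℕ} (hl : l ≤ N) :
    co M a (eta (e0C a) b l) = if l = 0 then Real.sqrt 2 else 0 := by
  induction l with
  | zero =>
    rw [eta, e0C, map_smul, co_self]; simp
  | succ l ih =>
    rw [eta, map_add, ih (by omega)]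
    by_cases h0 : l = 0
    · subst h0
      rw [co_four h.a_zero]; simp
    · rw [co_two (h.a_far l h0 hl)]; simp [h0]

theorem IsC.rep_a_zero {a : I} {b : ℕ → I} :
    rep cs (cs.simple a) (eta (e0C a) b 0) = - eta (e0C a) b 0 := by
  simp only [eta, e0C, map_smul, rep_simple_self, smul_neg]

theorem IsC.rep_a {a : I} {b : ℕ → I} {N : ℕ} (h : IsC M a b N) {l : ℕ} (h0 : l ≠ 0)
    (hl : l ≤ N) : rep cs (cs.simple a) (eta (e0C a) b l) = eta (e0C a) b l := by
  rw [rep_simple, h.co_a hl]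
  simp [h0]

theorem IsC.al_a {a : I} {b : ℕ → I} :
    (al a : I →₀ ℝ) = Real.sqrt 2 • eta (e0C a) b 0 := by
  rw [eta, e0C, smul_smul]
  have := Real.mul_self_sqrt (show (0 : ℝ) ≤ 2 by norm_num)
  rw [show Real.sqrt 2 * (Real.sqrt 2 / 2) = 1 by linarith, one_smul]

/-- In type `C`, the element `a b₀ a` together with the `b k` acts as a system of type `D`. -/
theorem IsC.isSignedPerm {a : I} {b : ℕ → I} {N : ℕ} (h : IsC M a b N) :
    IsSignedPerm (rep cs) (par cs (nodes a b N)) (fun k => cs.simple (b k))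
      (cs.simple a * cs.simple (b 0) * cs.simple a) (eta (e0C a) b) N where
  b_mem k hk := simple_mem_nodes cs hk
  d_mem := by
    have := h.two_le
    exact mul_mem (mul_mem (simple_mem_par mem_nodes_d) (simple_mem_nodes cs (by omega)))
      (simple_mem_par mem_nodes_d)
  b_left k hk := rep_b_left cs h.toIsChain (fun _ => h.co_e0) hk
  b_right k hk := rep_b_right cs h.toIsChain (fun _ => h.co_e0) hk
  b_fix k hk l hl h1 h2 := rep_b_fix cs h.toIsChain (fun _ => h.co_e0) hk hl h1 h2
  d_zero := by
    have := h.two_le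
    rw [rep_mul, rep_mul, IsC.rep_a_zero, map_neg, map_neg,
      rep_b_left cs h.toIsChain (fun _ => h.co_e0) (by omega), h.rep_a cs (by omega) (by omega)]
  d_one := by
    have := h.two_le
    rw [rep_mul, rep_mul, h.rep_a cs (by omega) (by omega),
      rep_b_right cs h.toIsChain (fun _ => h.co_e0) (by omega), IsC.rep_a_zero]
  d_fix l hl h2 := by
    have := h.two_le
    rw [rep_mul, rep_mul, h.rep_a cs (by omega) hl,
      rep_b_fix cs h.toIsChain (fun _ => h.co_e0) (by omega) hl (by omega) (by omega),
      h.rep_a cs (by omega) hl]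
  faithful g hg g' hg' e := by
    have hN := h.two_le
    refine par_ext hg hg' ?_
    rintro _ (rfl | ⟨k, hk, rfl⟩)
    · rw [IsC.al_a (b := b), map_smul, map_smul, e 0 (by omega)]
    · rw [al_b (e₀ := e0C a) k, map_sub, map_sub, e k (le_of_lt hk), e (k + 1) hk]

/-- The central involution `a · w` of a parabolic subgroup of type `C_{N+1}`, `N` even. -/
def zC (a : I) (b : ℕ → I) (N : ℕ) : W :=
  cs.simple a * flips (fun k => cs.simple (b k)) (cs.simple a * cs.simple (b 0) * cs.simple a) N

theorem IsC.zC_mem {a : I} {b : ℕ → I} {N : ℕ} (h : IsC M a b N) :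
    zC cs a b N ∈ par cs (nodes a b N) :=
  mul_mem (simple_mem_par mem_nodes_d) ((h.isSignedPerm cs).flips_mem le_rfl)

/-- The element `zC` acts as `-1` on the span of the simple roots of its diagram. -/
theorem IsC.rep_zC {a : I} {b : ℕ → I} {N : ℕ} (h : IsC M a b N) (hN : Even N) {v : I →₀ ℝ}
    (hv : v ∈ Finsupp.supported ℝ ℝ (nodes a b N)) : rep cs (zC cs a b N) v = - v := by
  have hN2 := h.two_le
  have hP := h.isSignedPerm cs
  have key : ∀ l ≤ N, rep cs (zC cs a b N) (eta (e0C a) b l) = - eta (e0C a) b l := by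
    intro l hl
    rw [zC, rep_mul]
    by_cases h0 : l = 0
    · subst h0
      rw [hP.rho_flips_zero hN, IsC.rep_a_zero]
    · rw [hP.rho_flips h0 hl, map_neg, h.rep_a cs h0 hl]
  refine ext_supported (f' := -LinearMap.id) ?_ hv
  simp only [LinearMap.neg_apply, LinearMap.id_apply]
  rintro _ (rfl | ⟨k, hk, rfl⟩)
  · rw [IsC.al_a (b := b), map_smul, key 0 (by omega), smul_neg]
  · rw [al_b (e₀ := e0C a) k, map_sub, key k (le_of_lt hk), key (k + 1) hk]
    abel

theorem IsC.zC_comm {a : I} {b : ℕ → I} {N : ℕ} (h : IsC M a b N) (hN : Even N) {g : W}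
    (hg : g ∈ par cs (nodes a b N)) : zC cs a b N * g = g * zC cs a b N := by
  refine par_ext (mul_mem (h.zC_mem cs) hg) (mul_mem hg (h.zC_mem cs)) fun j hj => ?_
  rw [rep_mul, rep_mul, h.rep_zC cs hN (al_mem_supported hj),
    h.rep_zC cs hN (rep_mem_supported hg (al_mem_supported hj)), map_neg]

theorem IsC.zC_sq {a : I} {b : ℕ → I} {N : ℕ} (h : IsC M a b N) (hN : Even N) :
    zC cs a b N * zC cs a b N = 1 := by
  refine par_ext (mul_mem (h.zC_mem cs) (h.zC_mem cs)) (one_mem _) fun j hj => ?_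
  rw [rep_mul, rep_one, h.rep_zC cs hN (al_mem_supported hj), map_neg,
    h.rep_zC cs hN (al_mem_supported hj), neg_neg]

theorem conj_mem_commutator {P : Subgroup W} {g h : W} (hg : g ∈ P) (hh : h ∈ ⁅P, P⁆) :
    g * h * g⁻¹ ∈ ⁅P, P⁆ := by
  have hhP : h ∈ P := Subgroup.commutator_le_self P hh
  have := mul_mem (Subgroup.commutator_mem_commutator hg hhP) hh
  simpa [commutatorElement_def] using this

/-- The element `w = flips …` with `zC = a * w` lies in the commutator subgroup. -/
theorem IsC.flips_mem_commutator {a : I} {b : ℕ → I} {N : ℕ} (h : IsC M a b N) :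
    flips (fun k => cs.simple (b k)) (cs.simple a * cs.simple (b 0) * cs.simple a) N ∈
      ⁅par cs (nodes a b N), par cs (nodes a b N)⁆ := by
  have hN2 := h.two_le
  have hf : ∀ k < N,
      flip (fun k => cs.simple (b k)) (cs.simple a * cs.simple (b 0) * cs.simple a) k ∈
      ⁅par cs (nodes a b N), par cs (nodes a b N)⁆ := by
    intro k hk
    induction k with
    | zero =>
      have := Subgroup.commutator_mem_commutator (simple_mem_nodes cs (d := a) (b := b) hk)
        (simple_mem_par (cs := cs) (mem_nodes_d (d := a) (b := b) (N := N)))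
      simpa [commutatorElement_def, flip, mul_assoc] using this
    | succ k ih =>
      have := conj_mem_commutator (simple_mem_nodes cs (d := a) (b := b) hk) (ih (by omega))
      simpa [flip] using this
  have hn : ∀ n ≤ N,
      flips (fun k => cs.simple (b k)) (cs.simple a * cs.simple (b 0) * cs.simple a) n ∈
      ⁅par cs (nodes a b N), par cs (nodes a b N)⁆ := by
    intro n hn
    induction n with
    | zero => exact one_mem _
    | succ n ih => exact mul_mem (ih (by omega)) (hf n hn)
  exact hn N le_rfl

end Types

end COdd

/-! ### Necessity -/

namespace COdd

open CoxeterSystem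

section Forward

variable {I : Type*} {M : CoxeterMatrix I} (cs : CoxeterSystem M W)

/-- The stabilizer of a linear form on the geometric representation. -/
def stab (x : (I →₀ ℝ) →ₗ[ℝ] ℝ) : Subgroup W where
  carrier := {g : W | ∀ v, x (rep cs g v) = x v}
  one_mem' := fun v => by rw [rep_one]
  mul_mem' := fun {g h} hg hh v => by rw [rep_mul, hg, hh]
  inv_mem' := fun {g} hg v => by
    have := hg (rep cs g⁻¹ v)
    rwa [rep_rep_inv, eq_comm] at this

theorem mem_stab {x : (I →₀ ℝ) →ₗ[ℝ] ℝ} {g : W} :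
    g ∈ stab cs x ↔ ∀ v, x (rep cs g v) = x v := Iff.rfl

/-- An involution commuting with the rotation `s_i s_j` of order three acts as a scalar `±1` on
the plane spanned by `al i` and `al j`. -/
theorem edge_sign {i j : I} (hij : M i j = 3) {z : W} (hz : z * z = 1)
    (hc : z * (cs.simple i * cs.simple j) = cs.simple i * cs.simple j * z) :
    ∃ ε : ℝ, (ε = 1 ∨ ε = -1) ∧ rep cs z (al i) = ε • al i ∧ rep cs z (al j) = ε • al j := by
  have hne : i ≠ j := by
    rintro rfl
    rw [M.diagonal] at hij
    omega
  have h1 : co M i (al j) = -1 := co_three hij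
  have h2 : co M j (al i) = -1 := by rw [co_symm, h1]
  have hcv : ∀ v, rep cs z (rep cs (cs.simple i * cs.simple j) v) =
      rep cs (cs.simple i * cs.simple j) (rep cs z v) := fun v => by
    rw [← rep_mul, ← rep_mul, hc]
  have hr : ∀ v, rep cs (cs.simple i * cs.simple j) v =
      v - co M j v • al j - (co M i v + co M j v) • al i := fun v => by
    rw [rep_mul, rep_simple, rep_simple, map_sub, map_smul, h1]
    simp only [smul_eq_mul]
    module
  have hri : rep cs (cs.simple i * cs.simple j) (al i) = al j := by
    rw [hr, h2, co_self]; module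
  have hrj : rep cs (cs.simple i * cs.simple j) (al j) = - al i - al j := by
    rw [hr, h1, co_self]; module
  -- `al i` is in the image of `s_i s_j - 1`, hence so is its image under `z`
  obtain ⟨p, r, hpr⟩ : ∃ p r : ℝ, rep cs z (al i) = p • al i + r • al j := by
    set u : I →₀ ℝ := (-1 / 3 : ℝ) • ((2 : ℝ) • al i + al j) with hu
    have hiu : al i = rep cs (cs.simple i * cs.simple j) u - u := by
      rw [hu, map_smul, map_add, map_smul, hri, hrj]; module
    refine ⟨-(co M i (rep cs z u) + co M j (rep cs z u)), -co M j (rep cs z u), ?_⟩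
    conv_lhs => rw [hiu, map_sub, hcv, hr]
    module
  have hzj : rep cs z (al j) = p • al j + r • (- al i - al j) := by
    rw [← hri, hcv, hpr, map_add, map_smul, map_smul, hri, hrj]
  have hzz : rep cs z (rep cs z (al i)) = al i := by rw [← rep_mul, hz, rep_one]
  rw [hpr, map_add, map_smul, map_smul, hpr, hzj] at hzz
  have e1 := DFunLike.congr_fun hzz i
  have e2 := DFunLike.congr_fun hzz j
  simp [al, hne, hne.symm] at e1 e2
  have hr0 : r = 0 := by
    by_contra hr0
    have : r = 2 * p := by
      have : r * (r - 2 * p) = 0 := by linarith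
      rcases mul_eq_zero.1 this with h | h
      · exact absurd h hr0
      · linarith
    subst this
    nlinarith [sq_nonneg p]
  subst hr0
  refine ⟨p, ?_, by rw [hpr]; module, by rw [hzj]; module⟩
  have : (p - 1) * (p + 1) = 0 := by linarith
  rcases mul_eq_zero.1 this with h | h
  · left; linarith
  · right; linarith

/-- The sign of `edge_sign` propagates along an edge labelled `3`. -/
theorem edge_transfer {i j : I} (hij : M i j = 3) {z : W} (hz : z * z = 1)
    (hc : z * (cs.simple i * cs.simple j) = cs.simple i * cs.simple j * z) {ε : ℝ}
    (h : rep cs z (al i) = ε • al i) : rep cs z (al j) = ε • al j := by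
  obtain ⟨ε', -, h1, h2⟩ := edge_sign cs hij hz hc
  rw [h1] at h
  have := DFunLike.congr_fun h i
  simp [al] at this
  rwa [this] at h2

/-- If `s_i s_j` has order three, it is the inverse of the commutator of `s_i` and `s_j`. -/
theorem rotation_mem_commutator {P : Subgroup W} {i j : I} (hij : M i j = 3)
    (hi : cs.simple i ∈ P) (hj : cs.simple j ∈ P) : cs.simple i * cs.simple j ∈ ⁅P, P⁆ := by
  have h := inv_mem (Subgroup.commutator_mem_commutator hi hj)
  have h3 := cs.simple_mul_simple_pow i j
  rw [hij] at h3
  rw [commutatorElement_def] at h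
  have : (cs.simple i * cs.simple j * (cs.simple i)⁻¹ * (cs.simple j)⁻¹)⁻¹ =
      cs.simple i * cs.simple j := by
    rw [inv_eq_iff_mul_eq_one, inv_simple, inv_simple, ← h3]
    simp only [pow_succ, pow_zero, one_mul, mul_assoc]
  rwa [this] at h

/-- An involution `z` centralizing the commutator subgroup of a base of type `D` of odd rank
fixes its simple roots: it acts as a sign, and the sign `-1` would make `z` times the signed
permutation `flips` an element exchanging the simple roots `d` and `b 0`. -/
theorem IsD.fix_supported {d : I} {b : ℕ → I} {N : ℕ} (h : IsD M d b N) (hN : Even N)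
    (hfin : (par cs (nodes d b N) : Set W).Finite)
    (hmax : ∀ s, s ∉ nodes d b N → (par cs (insert s (nodes d b N)) : Set W).Finite →
      ∀ t ∈ nodes d b N, M s t = 2)
    {z : W} (hz : z * z = 1)
    (hc : ∀ g ∈ ⁅par cs (nodes d b N), par cs (nodes d b N)⁆, z * g = g * z)
    {v : I →₀ ℝ} (hv : v ∈ Finsupp.supported ℝ ℝ (nodes d b N)) : rep cs z v = v := by
  have h2 := h.two_le
  have hce : ∀ i ∈ nodes d b N, ∀ j ∈ nodes d b N, M i j = 3 →
      z * (cs.simple i * cs.simple j) = cs.simple i * cs.simple j * z := fun i hi j hj hij =>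
    hc _ (rotation_mem_commutator cs hij (simple_mem_par hi) (simple_mem_par hj))
  obtain ⟨ε, hε, hε0, hε1⟩ := edge_sign cs (h.adj 0 h2) hz
    (hce _ (mem_nodes_b (by omega)) _ (mem_nodes_b (by omega)) (h.adj 0 h2))
  have hb : ∀ k < N, rep cs z (al (b k)) = ε • al (b k) := by
    intro k hk
    induction k with
    | zero => exact hε0
    | succ k ih =>
      exact edge_transfer cs (h.adj k hk) hz
        (hce _ (mem_nodes_b (by omega)) _ (mem_nodes_b hk) (h.adj k hk)) (ih (by omega))
  have hd1 : M (b 1) d = 3 := by rw [M.symmetric, h.d_one]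
  have hd : rep cs z (al d) = ε • al d :=
    edge_transfer cs hd1 hz (hce _ (mem_nodes_b (by omega)) _ mem_nodes_d hd1) hε1
  have hall : ∀ v ∈ Finsupp.supported ℝ ℝ (nodes d b N), rep cs z v = ε • v := by
    intro v hv
    refine ext_supported (f' := ε • LinearMap.id) ?_ hv
    rintro _ (rfl | ⟨k, hk, rfl⟩)
    · exact hd
    · exact hb k hk
  rcases hε with rfl | rfl
  · rw [hall v hv, one_smul]
  exfalso
  have hP := h.isSignedPerm cs
  set w := flips (fun k => cs.simple (b k)) (cs.simple d) N with hw
  have hwP : w ∈ par cs (nodes d b N) := hP.flips_mem le_rfl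
  have hw0 : rep cs w (eta (e0D d b) b 0) = eta (e0D d b) b 0 := hP.rho_flips_zero hN
  have hwl : ∀ l, l ≠ 0 → l ≤ N → rep cs w (eta (e0D d b) b l) = - eta (e0D d b) b l :=
    fun l h0 hl => hP.rho_flips h0 hl
  have hyd : rep cs (z * w) (al d) = al (b 0) := by
    rw [rep_mul, IsD.al_d (b := b), map_add, hw0, hwl 1 (by omega) (by omega),
      show eta (e0D d b) b 0 + - eta (e0D d b) b 1 = - al (b 0) by
        rw [al_b (e₀ := e0D d b) 0]; abel, map_neg, hb 0 (by omega)]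
    module
  have hy0 : rep cs (z * w) (al (b 0)) = al d := by
    rw [rep_mul, al_b (e₀ := e0D d b) 0, map_sub, hw0, hwl 1 (by omega) (by omega),
      show - eta (e0D d b) b (0 + 1) - eta (e0D d b) b 0 = - al d by
        rw [IsD.al_d (b := b)]; abel, map_neg, hd]
    module
  have hyk : ∀ k, k ≠ 0 → k < N → rep cs (z * w) (al (b k)) = al (b k) := by
    intro k h0 hk
    rw [rep_mul, al_b (e₀ := e0D d b) k, map_sub, hwl k h0 hk.le, hwl (k + 1) (by omega) hk,
      show - eta (e0D d b) b (k + 1) - - eta (e0D d b) b k = - al (b k) by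
        rw [al_b (e₀ := e0D d b) k]; abel, map_neg, hb k hk, al_b (e₀ := e0D d b) k]
    module
  have hal : ∀ i : I, (0 : I →₀ ℝ) ≤ al i := fun i => by simp [al]
  have hfix := normalizer_fix cs hfin hmax (z * w) ?_ ?_ d mem_nodes_d
  · rw [hyd] at hfix
    have hbd : b 0 = d := by
      by_contra hne
      have := DFunLike.congr_fun hfix d
      simp [al, hne] at this
    have := h.d_zero
    rw [hbd, M.diagonal] at this
    omega
  · rintro _ (rfl | ⟨k, hk, rfl⟩)
    · rw [hyd]; exact hal _
    · by_cases h0 : k = 0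
      · subst h0; rw [hy0]; exact hal _
      · rw [hyk k h0 hk]; exact hal _
  · intro u
    rw [rep_mul]
    constructor
    · intro hu
      have hu' := rep_mem_supported hwP hu
      rw [hall _ hu']
      exact Submodule.smul_mem _ _ hu'
    · intro hu
      have h3 : rep cs z (rep cs z (rep cs w u)) = rep cs w u := by rw [← rep_mul, hz, rep_one]
      rw [hall _ hu] at h3
      have h4 : rep cs w u ∈ Finsupp.supported ℝ ℝ (nodes d b N) := by
        rw [← h3]; exact Submodule.smul_mem _ _ hu
      have h5 := rep_mem_supported (inv_mem hwP) h4
      rwa [rep_inv_rep] at h5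

/-- Let `z` be an involution centralizing the commutator subgroup of a base of type `D` of odd
rank and let `k` be an element of that commutator subgroup. A finite subgroup containing `k * z`
is contained in a finite subgroup containing `z`. -/
theorem IsD.exists_finite {d : I} {b : ℕ → I} {N : ℕ} (h : IsD M d b N) (hN : Even N)
    (hfin : (par cs (nodes d b N) : Set W).Finite)
    (hmax : ∀ s, s ∉ nodes d b N → (par cs (insert s (nodes d b N)) : Set W).Finite →
      ∀ t ∈ nodes d b N, M s t = 2)
    {z k : W} (hz : z * z = 1)
    (hc : ∀ g ∈ ⁅par cs (nodes d b N), par cs (nodes d b N)⁆, z * g = g * z)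
    (hk : k ∈ ⁅par cs (nodes d b N), par cs (nodes d b N)⁆)
    {F : Subgroup W} (hF : (F : Set W).Finite) (hkz : k * z ∈ F) :
    ∃ F' : Subgroup W, (F' : Set W).Finite ∧ F ≤ F' ∧ z ∈ F' := by
  obtain ⟨x, hx, hxfin⟩ := exists_invariant cs hF
  refine ⟨stab cs x, hxfin, fun f hf => hx f hf, fun v => ?_⟩
  have hkP : k ∈ par cs (nodes d b N) := Subgroup.commutator_le_self _ hk
  -- the vector `u = z v - v` is fixed by `k` and negated by `z`
  set u := rep cs z v - v with hu
  have hzu : rep cs z u = - u := by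
    rw [hu, map_sub, ← rep_mul, hz, rep_one]; abel
  have hku : rep cs k u = u := by
    have h1 : rep cs k v - v ∈ Finsupp.supported ℝ ℝ (nodes d b N) := by
      rw [Finsupp.mem_supported']
      intro l hl
      rw [Finsupp.sub_apply, rep_apply_of_notMem hkP v hl, sub_self]
    have h2 := h.fix_supported cs hN hfin hmax hz hc h1
    rw [map_sub, ← rep_mul, hc k hk, rep_mul] at h2
    rw [hu, map_sub, sub_eq_sub_iff_sub_eq_sub]
    exact h2
  have h3 := hx _ hkz u
  rw [rep_mul, hzu, map_neg, hku, map_neg] at h3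
  have h4 : x u = 0 := by linarith
  rw [hu, map_sub] at h4
  linarith

/-- If a finite subgroup contains `zC` and the simple reflection `s`, then the diagram of type
`C` together with `s` generates a finite subgroup. -/
theorem IsC.finite_insert {a : I} {b : ℕ → I} {N : ℕ} (h : IsC M a b N) (hN : Even N) {s : I}
    {F : Subgroup W} (hF : (F : Set W).Finite) (hs : cs.simple s ∈ F) (hz : zC cs a b N ∈ F) :
    (par cs (insert s (nodes a b N)) : Set W).Finite := by
  obtain ⟨x, hx, hxfin⟩ := exists_invariant cs hF
  have hle : par cs (insert s (nodes a b N)) ≤ stab cs x := by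
    rw [par, Subgroup.closure_le]
    rintro _ ⟨t, rfl | ht, rfl⟩
    · exact hx _ hs
    · intro v
      have h1 := hx _ hz (al t)
      rw [h.rep_zC cs hN (al_mem_supported ht), map_neg] at h1
      have h2 : x (al t) = 0 := by linarith
      rw [rep_simple, map_sub, map_smul, h2, smul_zero, sub_zero]
  exact Set.Finite.subset hxfin hle

/-- Two involutions whose product has finite order generate a finite subgroup. -/
theorem dihedral_finite {s t : W} (hs : s * s = 1) (ht : t * t = 1) {n : ℕ} (hn : n ≠ 0)
    (hst : (s * t) ^ n = 1) : (Subgroup.closure {s, t} : Set W).Finite := by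
  have hfo : IsOfFinOrder (s * t) := isOfFinOrder_iff_pow_eq_one.2 ⟨n, Nat.pos_of_ne_zero hn, hst⟩
  have hZ : (Subgroup.zpowers (s * t) : Set W).Finite := hfo.finite_zpowers
  have hsi : s⁻¹ = s := inv_eq_of_mul_eq_one_left hs
  have hti : t⁻¹ = t := inv_eq_of_mul_eq_one_left ht
  have hsemi : SemiconjBy s (s * t) (s * t)⁻¹ := by
    rw [SemiconjBy, mul_inv_rev, hsi, hti, ← mul_assoc, hs, one_mul, mul_assoc, hs, mul_one]
  have hcomm : ∀ j : ℤ, s * (s * t) ^ j = (s * t) ^ (-j) * s := fun j => by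
    have := (hsemi.zpow_right j).eq
    rwa [inv_zpow'] at this
  have key : ∀ x ∈ Subgroup.closure {s, t},
      (∃ j : ℤ, x = (s * t) ^ j) ∨ ∃ j : ℤ, x = (s * t) ^ j * s := by
    intro x hx
    induction hx using Subgroup.closure_induction with
    | mem x hx =>
      rcases hx with rfl | rfl
      · exact Or.inr ⟨0, by simp⟩
      · refine Or.inr ⟨-1, ?_⟩
        rw [zpow_neg_one, mul_inv_rev, hsi, hti, mul_assoc, hs, mul_one]
    | one => exact Or.inl ⟨0, by simp⟩
    | mul x y _ _ hx hy =>
      rcases hx with ⟨j, rfl⟩ | ⟨j, rfl⟩ <;> rcases hy with ⟨l, rfl⟩ | ⟨l, rfl⟩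
      · exact Or.inl ⟨j + l, by rw [zpow_add]⟩
      · exact Or.inr ⟨j + l, by rw [zpow_add, mul_assoc]⟩
      · exact Or.inr ⟨j + -l, by rw [zpow_add, mul_assoc, hcomm, mul_assoc]⟩
      · refine Or.inl ⟨j + -l, ?_⟩
        rw [zpow_add, mul_assoc, ← mul_assoc s, hcomm, mul_assoc, hs, mul_one]
    | inv x _ hx =>
      rcases hx with ⟨j, rfl⟩ | ⟨j, rfl⟩
      · exact Or.inl ⟨-j, by rw [zpow_neg]⟩
      · exact Or.inr ⟨j, by rw [mul_inv_rev, hsi, ← zpow_neg, hcomm, neg_neg]⟩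
  refine (hZ.union (hZ.image (· * s))).subset fun x hx => ?_
  rcases key x hx with ⟨j, rfl⟩ | ⟨j, rfl⟩
  · exact Or.inl ⟨j, rfl⟩
  · exact Or.inr ⟨_, ⟨j, rfl⟩, rfl⟩

end Forward

section Translate

theorem par_eq_closure {S : Set W} {M : CoxeterMatrix S} (cs : CoxeterSystem M W)
    (hsimple : ∀ s : S, cs.simple s = (s : W)) (J : Set S) :
    par cs J = Subgroup.closure (Subtype.val '' J) := by
  rw [par]
  congr 1
  exact Set.image_congr fun s _ => hsimple s

set_option linter.unusedSectionVars false in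
/-- A base of type `cMat (2 * q + 1)` is enumerated as a diagram `IsC` with special end vertex `a`:
since `m b c = 3`, the vertex `b` is not an end of the diagram, so the end of the edge of label `4`
is `a`. -/
theorem exists_isC {m : W → W → ℕ} {S B : Set W} {M : CoxeterMatrix S}
    (hm : ∀ s t : S, M.M s t = m s t) (hBS : B ⊆ S) {q : ℕ} (hq : 1 ≤ q)
    (htype : HasType m B (cMat (2 * q + 1))) {a b c : W} (ha : a ∈ B) (hb : b ∈ B) (hc : c ∈ B)
    (hab : m a b = 4) (hbc : m b c = 3) :
    ∃ bb : ℕ → S, IsC M ⟨a, hBS ha⟩ bb (2 * q) ∧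
      Subtype.val '' nodes (⟨a, hBS ha⟩ : S) bb (2 * q) = B := by
  obtain ⟨e, he⟩ := htype
  have hea : (e ⟨a, ha⟩).val = 2 * q := by
    have h1 := he ⟨a, ha⟩ ⟨b, hb⟩
    have h2 := he ⟨b, hb⟩ ⟨c, hc⟩
    simp only [hab, hbc, cMat, Fin.ext_iff] at h1 h2
    have := (e ⟨a, ha⟩).isLt
    split_ifs at h1 h2 <;> omega
  let bf : ℕ → B := fun k => e.symm ⟨2 * q - 1 - k, by omega⟩
  refine ⟨fun k => ⟨bf k, hBS (bf k).2⟩, ⟨⟨?_, ?_⟩, ?_, ?_, ?_⟩, ?_⟩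
  · intro k hk
    refine (hm _ _).trans ((he _ _).trans ?_)
    simp only [Equiv.apply_symm_apply, cMat, Fin.ext_iff]
    split_ifs <;> omega
  · intro k l hkl hl
    refine (hm _ _).trans ((he _ _).trans ?_)
    simp only [Equiv.apply_symm_apply, cMat, Fin.ext_iff]
    split_ifs <;> omega
  · omega
  · refine (hm _ _).trans ((he ⟨a, ha⟩ _).trans ?_)
    simp only [Equiv.apply_symm_apply, cMat, Fin.ext_iff, hea, true_or, if_true]
    split_ifs <;> omega
  · intro k h0 hk
    refine (hm _ _).trans ((he ⟨a, ha⟩ _).trans ?_)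
    simp only [Equiv.apply_symm_apply, cMat, Fin.ext_iff, hea]
    split_ifs <;> omega
  · ext x
    constructor
    · rintro ⟨_, rfl | ⟨k, _, rfl⟩, rfl⟩
      · exact ha
      · exact (bf k).2
    · intro hx
      by_cases hxe : (e ⟨x, hx⟩).val = 2 * q
      · refine ⟨_, mem_nodes_d, ?_⟩
        have : e ⟨x, hx⟩ = e ⟨a, ha⟩ := Fin.ext (hxe.trans hea.symm)
        exact (congrArg Subtype.val (e.injective this)).symm
      · have hlt := (e ⟨x, hx⟩).isLt
        refine ⟨_, mem_nodes_b (k := 2 * q - 1 - (e ⟨x, hx⟩).val) (by omega), ?_⟩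
        have : bf (2 * q - 1 - (e ⟨x, hx⟩).val) = ⟨x, hx⟩ := by
          simp only [bf]
          rw [Equiv.symm_apply_eq]
          apply Fin.ext
          show 2 * q - 1 - (2 * q - 1 - (e ⟨x, hx⟩).val) = (e ⟨x, hx⟩).val
          omega
        show (bf (2 * q - 1 - (e ⟨x, hx⟩).val) : W) = x
        rw [this]

set_option linter.unusedSectionVars false in
/-- A base of type `bMat (2 * q + 1)` is enumerated as a diagram `IsD`. -/
theorem exists_isD {m : W → W → ℕ} {S B : Set W} {M : CoxeterMatrix S}
    (hm : ∀ s t : S, M.M s t = m s t) (hBS : B ⊆ S) {q : ℕ} (hq : 1 ≤ q)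
    (htype : HasType m B (bMat (2 * q + 1))) :
    ∃ (d : S) (bb : ℕ → S), IsD M d bb (2 * q) ∧ Subtype.val '' nodes d bb (2 * q) = B := by
  obtain ⟨e, he⟩ := htype
  let df : B := e.symm ⟨2 * q, by omega⟩
  let bf : ℕ → B := fun k => e.symm ⟨2 * q - 1 - k, by omega⟩
  refine ⟨⟨df, hBS df.2⟩, fun k => ⟨bf k, hBS (bf k).2⟩, ⟨⟨?_, ?_⟩, ?_, ?_, ?_, ?_⟩, ?_⟩
  · intro k hk
    refine (hm _ _).trans ((he _ _).trans ?_)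
    simp only [Equiv.apply_symm_apply, bMat, Fin.ext_iff]
    split_ifs <;> omega
  · intro k l hkl hl
    refine (hm _ _).trans ((he _ _).trans ?_)
    simp only [Equiv.apply_symm_apply, bMat, Fin.ext_iff]
    split_ifs <;> omega
  · omega
  · refine (hm _ _).trans ((he _ _).trans ?_)
    simp only [Equiv.apply_symm_apply, bMat, Fin.ext_iff]
    split_ifs <;> omega
  · refine (hm _ _).trans ((he _ _).trans ?_)
    simp only [Equiv.apply_symm_apply, bMat, Fin.ext_iff, and_true]
    split_ifs <;> omega
  · intro k h0 hk
    refine (hm _ _).trans ((he _ _).trans ?_)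
    simp only [Equiv.apply_symm_apply, bMat, Fin.ext_iff, and_true]
    split_ifs <;> omega
  · ext x
    constructor
    · rintro ⟨_, rfl | ⟨k, _, rfl⟩, rfl⟩
      · exact df.2
      · exact (bf k).2
    · intro hx
      by_cases hxe : (e ⟨x, hx⟩).val = 2 * q
      · refine ⟨_, mem_nodes_d, ?_⟩
        have : df = ⟨x, hx⟩ := by
          simp only [df]
          rw [Equiv.symm_apply_eq]
          exact Fin.ext hxe.symm
        show (df : W) = x
        rw [this]
      · have hlt := (e ⟨x, hx⟩).isLt
        refine ⟨_, mem_nodes_b (k := 2 * q - 1 - (e ⟨x, hx⟩).val) (by omega), ?_⟩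
        have : bf (2 * q - 1 - (e ⟨x, hx⟩).val) = ⟨x, hx⟩ := by
          simp only [bf]
          rw [Equiv.symm_apply_eq]
          apply Fin.ext
          show 2 * q - 1 - (2 * q - 1 - (e ⟨x, hx⟩).val) = (e ⟨x, hx⟩).val
          omega
        show (bf (2 * q - 1 - (e ⟨x, hx⟩).val) : W) = x
        rw [this]

/-- Maximality of a base: a further generator spanning a finite visual subgroup together with the
base commutes with the base. -/
theorem base_max {m : W → W → ℕ} {S B : Set W} (hcs : IsCoxeterSystemOn m S)
    (hB : IsBase m S B) {s : W} (hs : s ∈ S) (hsB : s ∉ B)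
    (hfin : (Subgroup.closure (insert s B) : Set W).Finite) : ∀ t ∈ B, m s t = 2 := by
  obtain ⟨M, cs, hsimple, hm⟩ := hcs
  obtain ⟨hBS, ⟨hne, hirr⟩, -, -, hmaxB⟩ := hB
  intro t ht
  by_contra hst
  have htS := hBS ht
  have hne' : s ≠ t := fun h => hsB (h ▸ ht)
  have h1 : m s t ≠ 1 := by
    have := M.off_diagonal ⟨s, hs⟩ ⟨t, htS⟩ (fun h => hne' (congrArg Subtype.val h))
    rwa [hm] at this
  have hsymm : m t s = m s t := by
    have := M.symmetric ⟨s, hs⟩ ⟨t, htS⟩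
    rwa [hm, hm, eq_comm] at this
  have hedge : m s t = 0 ∨ 2 < m s t := by omega
  have hlift : ∀ u ∈ B, ∀ v ∈ B, Relation.ReflTransGen
      (fun x y => x ∈ insert s B ∧ y ∈ insert s B ∧ x ≠ y ∧ (m x y = 0 ∨ 2 < m x y)) u v := by
    intro u hu v hv
    exact Relation.ReflTransGen.mono (fun x y h => ⟨Or.inr h.1, Or.inr h.2.1, h.2.2⟩) u v
      (hirr u hu v hv)
  have hto : ∀ u ∈ insert s B, Relation.ReflTransGen
      (fun x y => x ∈ insert s B ∧ y ∈ insert s B ∧ x ≠ y ∧ (m x y = 0 ∨ 2 < m x y)) u t := by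
    rintro u (rfl | hu)
    · exact Relation.ReflTransGen.single ⟨Or.inl rfl, Or.inr ht, hne', hedge⟩
    · exact hlift u hu t ht
  have hfrom : ∀ u ∈ insert s B, Relation.ReflTransGen
      (fun x y => x ∈ insert s B ∧ y ∈ insert s B ∧ x ≠ y ∧ (m x y = 0 ∨ 2 < m x y)) t u := by
    rintro u (rfl | hu)
    · exact Relation.ReflTransGen.single ⟨Or.inr ht, Or.inl rfl, hne'.symm, by rwa [hsymm]⟩
    · exact hlift t ht u hu
  have := hmaxB (insert s B) (Set.insert_subset hs hBS) (Set.subset_insert s B)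
    ⟨⟨s, Or.inl rfl⟩, fun u hu v hv => (hto u hu).trans (hfrom v hv)⟩ hfin
  exact hsB (this ▸ Or.inl rfl)

/-- Necessity. Write `zC = a * w` with `w` in the commutator subgroup of `⟨B⟩`. The finite subgroup
`⟨s, a⟩` contains `a = w * zC`; seen from the system `S'`, it lies in a finite subgroup containing
`zC` as well, so `⟨B ∪ {s}⟩` is finite and maximality of `B` applies. -/
theorem forward (m : W → W → ℕ) (S : Set W)
    (hcs : IsCoxeterSystemOn m S) (B : Set W) (q : ℕ) (hq : 1 ≤ q)
    (hB : IsBase m S B) (htype : HasType m B (cMat (2 * q + 1)))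
    (a b c : W) (ha : a ∈ B) (hb : b ∈ B) (hc : c ∈ B) (hab : m a b = 4) (hbc : m b c = 3)
    (S' : Set W) (m' : W → W → ℕ) (hcs' : IsCoxeterSystemOn m' S') (B' : Set W)
    (hB' : IsBase m' S' B') (htype' : HasType m' B' (bMat (2 * q + 1))) (hmatch : Matches B B')
    (s : W) (hs : s ∈ S) (hsB : s ∉ B) (hsa : m s a ≠ 0) : ∀ t ∈ B, m s t = 2 := by
  have hcs0 := hcs
  have hcs0' := hcs'
  have hBS := hB.1
  have hBS' := hB'.1
  obtain ⟨M, cs, hsimple, hm⟩ := hcs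
  obtain ⟨M', cs', hsimple', hm'⟩ := hcs'
  obtain ⟨bb, hC, hCB⟩ := exists_isC hm hBS hq htype ha hb hc hab hbc
  obtain ⟨d, bb', hD, hDB⟩ := exists_isD hm' hBS' hq htype'
  have hNe : Even (2 * q) := even_two_mul q
  set a0 : S := ⟨a, hBS ha⟩ with ha0
  have hP : par cs (nodes a0 bb (2 * q)) = Subgroup.closure B := by
    rw [par_eq_closure cs hsimple, hCB]
  have hP' : par cs' (nodes d bb' (2 * q)) = Subgroup.closure B' := by
    rw [par_eq_closure cs' hsimple', hDB]
  apply base_max hcs0 hB hs hsB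
  have hins : Subgroup.closure (insert s B) =
      par cs (insert (⟨s, hs⟩ : S) (nodes a0 bb (2 * q))) := by
    rw [par_eq_closure cs hsimple, Set.image_insert_eq, hCB]
  rw [hins]
  have hmax' : ∀ s', s' ∉ nodes d bb' (2 * q) →
      (par cs' (insert s' (nodes d bb' (2 * q))) : Set W).Finite →
      ∀ t ∈ nodes d bb' (2 * q), M' s' t = 2 := by
    intro s' hs' hf t ht
    rw [par_eq_closure cs' hsimple', Set.image_insert_eq, hDB] at hf
    have hs'B : (s' : W) ∉ B' := by
      rw [← hDB]
      rintro ⟨r, hr, hrs⟩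
      exact hs' (Subtype.ext hrs ▸ hr)
    have htB : (t : W) ∈ B' := by
      rw [← hDB]
      exact ⟨t, ht, rfl⟩
    exact (hm' _ _).trans (base_max hcs0' hB' s'.2 hs'B hf t htB)
  obtain ⟨g, hg⟩ := hmatch
  rw [← hP, ← hP'] at hg
  set w := flips (fun k => cs.simple (bb k)) (cs.simple a0 * cs.simple (bb 0) * cs.simple a0)
    (2 * q) with hw
  set z := zC cs a0 bb (2 * q) with hz
  have hwK := hC.flips_mem_commutator cs
  rw [← hw] at hwK
  have hwP := Subgroup.commutator_le_self _ hwK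
  have hww : w * w = 1 := (hC.isSignedPerm cs).flips_sq hNe
  have hzw : z = a * w := by rw [hz, zC, ← hw, hsimple]
  have hwz : w * z = a := by
    rw [← hC.zC_comm cs hNe hwP, ← hz, hzw, mul_assoc, hww, mul_one]
  have hzz : z * z = 1 := hC.zC_sq cs hNe
  have hfinF : (Subgroup.closure {s, a} : Set W).Finite := by
    have hsq : ∀ r : S, (r : W) * r = 1 := fun r => by
      rw [← hsimple, simple_mul_simple_self]
    refine dihedral_finite (hsq ⟨s, hs⟩) (hsq a0) hsa ?_
    have := cs.simple_mul_simple_pow ⟨s, hs⟩ a0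
    rwa [hm, hsimple, hsimple] at this
  set f : W →* W := (MulAut.conj g).toMonoidHom with hf
  have hfinj : Function.Injective f := (MulAut.conj g).injective
  obtain ⟨F', hF'fin, hF', hzF'⟩ := hD.exists_finite cs' hNe (z := f z) (k := f w)
    (F := (Subgroup.closure {s, a}).map f)
    (hP' ▸ hB'.2.2.1) hmax' (by rw [← map_mul, hzz, map_one])
    (fun x hx => by
      rw [← hg] at hx
      obtain ⟨y, hy, rfl⟩ := hx
      rw [← map_mul, ← map_mul, hC.zC_comm cs hNe (Subgroup.commutator_le_self _ hy)])
    (by rw [← hg]; exact ⟨w, hwK, rfl⟩)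
    (by rw [Subgroup.coe_map]; exact hfinF.image f)
    (by
      rw [← map_mul, hwz]
      exact ⟨a, Subgroup.subset_closure (by simp), rfl⟩)
  refine hC.finite_insert cs hNe (F := F'.comap f) ?_ ?_ hzF'
  · rw [Subgroup.coe_comap]
    exact hF'fin.preimage hfinj.injOn
  rw [hsimple]
  exact hF' ⟨s, Subgroup.subset_closure (by simp), rfl⟩

end Translate

end COdd

/-! ### Exchanging a generator for two -/

namespace COdd

open CoxeterSystem

section Labels

variable {I : Type*} {M : CoxeterMatrix I}

theorem IsChain.label {b : ℕ → I} {N : ℕ} (h : IsChain M b N) {k l : ℕ} (hk : k < N)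
    (hl : l < N) :
    M (b k) (b l) = if k = l then 1 else if k + 1 = l ∨ l + 1 = k then 3 else 2 := by
  rcases Nat.lt_trichotomy k l with hkl | rfl | hkl
  · by_cases h1 : k + 1 = l
    · subst h1
      rw [h.adj k hl, if_neg (by omega), if_pos (Or.inl rfl)]
    · rw [h.far k l (by omega) hl, if_neg (by omega), if_neg (by omega)]
  · rw [M.diagonal, if_pos rfl]
  · rw [M.symmetric]
    by_cases h1 : l + 1 = k
    · subst h1
      rw [h.adj l hk, if_neg (by omega), if_pos (Or.inr rfl)]
    · rw [h.far l k (by omega) hk, if_neg (by omega), if_neg (by omega)]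

theorem IsChain.ne {b : ℕ → I} {N : ℕ} (h : IsChain M b N) {k l : ℕ} (hk : k < N)
    (hl : l < N) (hkl : k ≠ l) : b k ≠ b l := by
  intro e
  have := h.label hk hl
  rw [e, M.diagonal, if_neg hkl] at this
  split_ifs at this <;> omega

theorem IsC.label {a : I} {b : ℕ → I} {N : ℕ} (h : IsC M a b N) {k : ℕ} (hk : k < N) :
    M a (b k) = if k = 0 then 4 else 2 := by
  split_ifs with h0
  · rw [h0, h.a_zero]
  · exact h.a_far k h0 hk

theorem IsC.ne {a : I} {b : ℕ → I} {N : ℕ} (h : IsC M a b N) {k : ℕ} (hk : k < N) :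
    b k ≠ a := by
  intro e
  have := h.label hk
  rw [e, M.diagonal] at this
  split_ifs at this <;> omega

theorem IsD.label {d : I} {b : ℕ → I} {N : ℕ} (h : IsD M d b N) {k : ℕ} (hk : k < N) :
    M d (b k) = if k = 1 then 3 else 2 := by
  split_ifs with h1
  · rw [h1, h.d_one]
  · rcases Nat.eq_zero_or_pos k with rfl | h0
    · exact h.d_zero
    · exact h.d_far k (by omega) hk

end Labels

section NewSystem

variable {I : Type*} {M : CoxeterMatrix I} (cs : CoxeterSystem M W)

open scoped Classical in
/-- The label between `a b₀ a` and the generator `j ≠ a` in the new system: infinite if it is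
infinite between `a` and `j`, otherwise that of `b₀` and `j`, except that `b₀` commutes with
`a b₀ a`. -/
noncomputable def dLabel (M : CoxeterMatrix I) (a b₀ j : I) : ℕ :=
  if M a j = 0 then 0 else if j = b₀ then 2 else M b₀ j

open scoped Classical in
/-- The Coxeter matrix of the generators `zC` (indexed by `none`), `a b₀ a` (indexed by `some a`)
and `i ≠ a` (indexed by `some i`). -/
noncomputable def newMat (M : CoxeterMatrix I) (a b₀ : I) : CoxeterMatrix (Option I) where
  M := Matrix.of fun u v => match u, v with
    | none, none => 1
    | none, some i => if M a i = 0 then 0 else 2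
    | some i, none => if M a i = 0 then 0 else 2
    | some i, some j =>
      if i = j then 1 else if i = a then dLabel M a b₀ j
      else if j = a then dLabel M a b₀ i else M i j
  isSymm := by
    ext u v
    rcases u with _ | i <;> rcases v with _ | j
    · rfl
    · rfl
    · rfl
    · simp only [Matrix.transpose_apply, Matrix.of_apply]
      by_cases hij : i = j
      · subst hij; rfl
      · rw [if_neg hij, if_neg (Ne.symm hij)]
        by_cases hi : i = a <;> by_cases hj : j = a
        · exact absurd (hi.trans hj.symm) hij
        · rw [if_neg hj, if_pos hi, if_pos hi]
        · rw [if_pos hj, if_neg hi, if_pos hj]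
        · rw [if_neg hj, if_neg hi, if_neg hi, if_neg hj, M.symmetric]
  diagonal := by
    rintro (_ | i)
    · rfl
    · simp
  off_diagonal := by
    rintro (_ | i) (_ | j) hij
    · exact absurd rfl hij
    · simp only [Matrix.of_apply]; split_ifs <;> omega
    · simp only [Matrix.of_apply]; split_ifs <;> omega
    · have hij' : i ≠ j := fun h => hij (congrArg some h)
      have hd : ∀ j, dLabel M a b₀ j ≠ 1 := fun j => by
        unfold dLabel
        split_ifs with h1 h2
        · omega
        · omega
        · exact M.off_diagonal _ _ (Ne.symm h2)
      simp only [Matrix.of_apply, if_neg hij']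
      split_ifs
      · exact hd _
      · exact hd _
      · exact M.off_diagonal _ _ hij'

theorem newMat_none {a b₀ i : I} (h : M a i ≠ 0) : newMat M a b₀ none (some i) = 2 := by
  simp [newMat, h]

theorem newMat_none_zero {a b₀ i : I} (h : M a i = 0) : newMat M a b₀ none (some i) = 0 := by
  simp [newMat, h]

theorem newMat_a {a b₀ i : I} (h : i ≠ a) :
    newMat M a b₀ (some a) (some i) = dLabel M a b₀ i := by
  simp [newMat, h.symm]

theorem newMat_of_ne {a b₀ i j : I} (hi : i ≠ a) (hj : j ≠ a) :
    newMat M a b₀ (some i) (some j) = M i j := by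
  by_cases hij : i = j
  · subst hij
    rw [CoxeterMatrix.diagonal, M.diagonal]
  · simp [newMat, hij, hi, hj]

theorem dLabel_b₀ {a b₀ : I} (h : M a b₀ ≠ 0) : dLabel M a b₀ b₀ = 2 := by
  simp [dLabel, h]

theorem dLabel_of_ne {a b₀ i : I} (h : M a i ≠ 0) (hi : i ≠ b₀) :
    dLabel M a b₀ i = M b₀ i := by
  simp [dLabel, h, hi]

theorem IsC.isD_new {a : I} {b : ℕ → I} {N : ℕ} (h : IsC M a b N) :
    IsD (newMat M a (b 0)) (some a) (fun k => some (b k)) N where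
  adj k hk := by rw [newMat_of_ne (h.ne (by omega)) (h.ne hk), h.adj k hk]
  far k l hkl hl := by rw [newMat_of_ne (h.ne (by omega)) (h.ne hl), h.far k l hkl hl]
  two_le := h.two_le
  d_zero := by
    have := h.two_le
    rw [newMat_a (h.ne (by omega)), dLabel_b₀ (by rw [h.a_zero]; omega)]
  d_one := by
    have := h.two_le
    rw [newMat_a (h.ne (by omega)), dLabel_of_ne (by rw [h.a_far 1] <;> omega)
      (h.toIsChain.ne (by omega) (by omega) (by omega)), h.adj 0 (by omega)]
  d_far k hk hkN := by
    rw [newMat_a (h.ne hkN), dLabel_of_ne (by rw [h.a_far k] <;> omega)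
      (h.toIsChain.ne (by omega) (by omega) (by omega)), h.far 0 k (by omega) hkN]

theorem simple_comm {i j : I} (h : M i j = 2) :
    cs.simple i * cs.simple j = cs.simple j * cs.simple i := by
  have := cs.simple_mul_simple_pow i j
  rw [h, pow_two] at this
  rw [eq_inv_of_mul_eq_one_left this, mul_inv_rev, inv_simple, inv_simple]

theorem par_comm {J : Set I} {x : W} (hx : ∀ t ∈ J, x * cs.simple t = cs.simple t * x) {g : W}
    (hg : g ∈ par cs J) : x * g = g * x := by
  have : par cs J ≤ Subgroup.centralizer {x} := by
    rw [par, Subgroup.closure_le]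
    rintro _ ⟨t, ht, rfl⟩
    exact Subgroup.mem_centralizer_singleton_iff.2 (hx t ht).symm
  exact (Subgroup.mem_centralizer_singleton_iff.1 (this hg)).symm

theorem pow_swap {G : Type*} [Group G] {x y : G} {n : ℕ} (h : (x * y) ^ n = 1) :
    (y * x) ^ n = 1 := by
  have : y * x = y * (x * y) * y⁻¹ := by group
  rw [this, conj_pow, h, mul_one, mul_inv_cancel]

theorem pow_two_of_comm {G : Type*} [Group G] {x y : G} (hx : x * x = 1) (hy : y * y = 1)
    (h : x * y = y * x) : (x * y) ^ 2 = 1 := by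
  rw [pow_two, mul_assoc, ← mul_assoc y, ← h, mul_assoc, hy, mul_one, hx]

section Exchange

variable {a : I} {b : ℕ → I} {N : ℕ}

/-- The element `a b₀ a` of a diagram of type `C`. -/
def dC (a : I) (b : ℕ → I) : W := cs.simple a * cs.simple (b 0) * cs.simple a

open scoped Classical in
/-- The images in `W` of the generators of the new system. -/
noncomputable def newGen (a : I) (b : ℕ → I) (N : ℕ) : Option I → W
  | none => zC cs a b N
  | some i => if i = a then dC cs a b else cs.simple i

theorem newGen_a : newGen cs a b N (some a) = dC cs a b := if_pos rfl

theorem newGen_of_ne {i : I} (hi : i ≠ a) : newGen cs a b N (some i) = cs.simple i := if_neg hi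

theorem dC_sq : dC cs a b * dC cs a b = 1 := by
  simp [dC, mul_assoc]

theorem IsC.dC_mem (h : IsC M a b N) : dC cs a b ∈ par cs (nodes a b N) :=
  (h.isSignedPerm cs).d_mem

theorem newGen_sq (h : IsC M a b N) (hN : Even N) (u : Option I) :
    newGen cs a b N u * newGen cs a b N u = 1 := by
  rcases u with _ | i
  · exact h.zC_sq cs hN
  · by_cases hi : i = a
    · rw [hi, newGen_a, dC_sq]
    · rw [newGen_of_ne cs hi, simple_mul_simple_self]

theorem newGen_none_comm (h : IsC M a b N) (hN : Even N)
    (hyp : ∀ s, s ∉ nodes a b N → M s a ≠ 0 → ∀ t ∈ nodes a b N, M s t = 2) {i : I}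
    (hi : M a i ≠ 0) :
    zC cs a b N * newGen cs a b N (some i) = newGen cs a b N (some i) * zC cs a b N := by
  by_cases hia : i = a
  · rw [hia, newGen_a]
    exact h.zC_comm cs hN (h.dC_mem cs)
  rw [newGen_of_ne cs hia]
  by_cases hin : i ∈ nodes a b N
  · exact h.zC_comm cs hN (simple_mem_par hin)
  · exact (par_comm cs (fun t ht => simple_comm cs (hyp i hin (by rwa [M.symmetric]) t ht))
      (h.zC_mem cs)).symm

theorem newGen_d_pow (h : IsC M a b N)
    (hyp : ∀ s, s ∉ nodes a b N → M s a ≠ 0 → ∀ t ∈ nodes a b N, M s t = 2) {i : I}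
    (hia : i ≠ a) : (dC cs a b * cs.simple i) ^ dLabel M a (b 0) i = 1 := by
  by_cases h0 : M a i = 0
  · rw [dLabel, if_pos h0, pow_zero]
  by_cases hib : i = b 0
  · rw [hib, dLabel_b₀ (by rw [h.a_zero]; omega)]
    have := cs.simple_mul_simple_pow a (b 0)
    rw [h.a_zero] at this
    rw [← this, dC]
    simp only [pow_succ, pow_zero, one_mul, mul_assoc]
  · rw [dLabel_of_ne h0 hib]
    have hcomm : cs.simple a * cs.simple i = cs.simple i * cs.simple a := by
      by_cases hin : i ∈ nodes a b N
      · rcases hin with rfl | ⟨k, hk, rfl⟩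
        · rfl
        · exact simple_comm cs (h.a_far k (fun e => hib (e ▸ rfl)) hk)
      · exact (simple_comm cs (hyp i hin (by rwa [M.symmetric]) a mem_nodes_d)).symm
    have h1 : dC cs a b * cs.simple i =
        cs.simple a * (cs.simple (b 0) * cs.simple i) * (cs.simple a)⁻¹ := by
      rw [dC, inv_simple, mul_assoc, hcomm]
      simp only [mul_assoc]
    rw [h1, conj_pow, simple_mul_simple_pow, mul_one, mul_inv_cancel]

/-- The elements `zC`, `a b₀ a` and `s_i`, `i ≠ a`, satisfy the relations of `newMat`. -/
theorem newGen_liftable (h : IsC M a b N) (hN : Even N)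
    (hyp : ∀ s, s ∉ nodes a b N → M s a ≠ 0 → ∀ t ∈ nodes a b N, M s t = 2) :
    (newMat M a (b 0)).IsLiftable (newGen cs a b N) := by
  have hn : ∀ i, (newGen cs a b N none * newGen cs a b N (some i)) ^
      newMat M a (b 0) none (some i) = 1 := fun i => by
    by_cases hi : M a i = 0
    · rw [newMat_none_zero hi, pow_zero]
    · rw [newMat_none hi]
      exact pow_two_of_comm (newGen_sq cs h hN _) (newGen_sq cs h hN _)
        (newGen_none_comm cs h hN hyp hi)
  have hd : ∀ i, i ≠ a → (newGen cs a b N (some a) * newGen cs a b N (some i)) ^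
      newMat M a (b 0) (some a) (some i) = 1 := fun i hi => by
    rw [newMat_a hi, newGen_a, newGen_of_ne cs hi, newGen_d_pow cs h hyp hi]
  rintro (_ | i) (_ | j)
  · rw [CoxeterMatrix.diagonal, pow_one, newGen_sq cs h hN]
  · exact hn j
  · rw [CoxeterMatrix.symmetric]
    exact pow_swap (hn i)
  · by_cases hi : i = a <;> by_cases hj : j = a
    · rw [hi, hj, CoxeterMatrix.diagonal, pow_one, newGen_sq cs h hN]
    · rw [hi]
      exact hd j hj
    · rw [hj, CoxeterMatrix.symmetric]
      exact pow_swap (hd i hi)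
    · rw [newMat_of_ne hi hj, newGen_of_ne cs hi, newGen_of_ne cs hj, simple_mul_simple_pow]

variable {G : Type*} [Group G] (cn : CoxeterSystem (newMat M a (b 0)) G)

/-- The word in the new generators representing `a`. -/
noncomputable def oldA (a : I) (b : ℕ → I) (N : ℕ)
    (cn : CoxeterSystem (newMat M a (b 0)) G) : G :=
  cn.simple none * flips (fun k => cn.simple (some (b k))) (cn.simple (some a)) N

open scoped Classical in
/-- The words in the new generators representing the old ones. -/
noncomputable def oldGen (a : I) (b : ℕ → I) (N : ℕ)
    (cn : CoxeterSystem (newMat M a (b 0)) G) (i : I) : G :=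
  if i = a then oldA a b N cn else cn.simple (some i)

theorem oldGen_a : oldGen a b N cn a = oldA a b N cn := if_pos rfl

theorem oldGen_of_ne {i : I} (hi : i ≠ a) : oldGen a b N cn i = cn.simple (some i) := if_neg hi

theorem new_nodes : nodes (some a) (fun k => some (b k)) N = some '' nodes a b N := by
  rw [nodes, nodes, Set.image_insert_eq, Set.image_image]

theorem none_comm (h : IsC M a b N) {g : G}
    (hg : g ∈ par cn (nodes (some a) (fun k => some (b k)) N)) :
    cn.simple none * g = g * cn.simple none := by
  refine par_comm cn (fun t ht => simple_comm cn ?_) hg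
  rw [new_nodes] at ht
  obtain ⟨i, rfl | ⟨k, hk, rfl⟩, rfl⟩ := ht
  · exact newMat_none (by rw [M.diagonal]; omega)
  · exact newMat_none (by rw [h.label hk]; split_ifs <;> omega)

theorem oldA_comm_of_notMem (h : IsC M a b N)
    (hyp : ∀ s, s ∉ nodes a b N → M s a ≠ 0 → ∀ t ∈ nodes a b N, M s t = 2) {s : I}
    (hs : s ∉ nodes a b N) (hsa : M a s ≠ 0) :
    cn.simple (some s) * oldA a b N cn = oldA a b N cn * cn.simple (some s) := by
  have h2 := h.two_le
  have hsa' : s ≠ a := fun e => hs (e ▸ mem_nodes_d)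
  have hyp' := hyp s hs (by rwa [M.symmetric])
  have h1 : cn.simple (some s) * cn.simple none = cn.simple none * cn.simple (some s) :=
    (simple_comm cn (newMat_none hsa)).symm
  have h3 : ∀ g ∈ par cn (nodes (some a) (fun k => some (b k)) N),
      cn.simple (some s) * g = g * cn.simple (some s) := fun g hg => by
    refine par_comm cn (fun t ht => (simple_comm cn ?_).symm) hg
    rw [new_nodes] at ht
    obtain ⟨i, hi | ⟨k, hk, rfl⟩, rfl⟩ := ht
    · rw [hi, newMat_a hsa', dLabel_of_ne hsa, M.symmetric, hyp' _ (mem_nodes_b (by omega))]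
      exact fun e => hs (e ▸ mem_nodes_b (by omega))
    · rw [newMat_of_ne (h.ne hk) hsa', M.symmetric, hyp' _ (mem_nodes_b hk)]
  rw [oldA, ← mul_assoc, h1, mul_assoc, h3 _ ((h.isD_new.isSignedPerm cn).flips_mem le_rfl),
    mul_assoc]

theorem oldA_sq (h : IsC M a b N) (hN : Even N) : oldA a b N cn * oldA a b N cn = 1 := by
  have hp := h.isD_new.isSignedPerm cn
  have hw := hp.flips_mem le_rfl
  have hs := hp.flips_sq hN
  rw [oldA, mul_assoc, ← mul_assoc _ (cn.simple none), ← none_comm cn h hw, mul_assoc, hs,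
    mul_one, simple_mul_simple_self]

theorem oldA_b (h : IsC M a b N) (hN : Even N) {k : ℕ} (h0 : k ≠ 0) (hk : k < N) :
    oldA a b N cn * cn.simple (some (b k)) = cn.simple (some (b k)) * oldA a b N cn := by
  have hp := h.isD_new.isSignedPerm cn
  rw [oldA, mul_assoc, hp.flips_b hN h0 hk, ← mul_assoc, none_comm cn h (hp.b_mem k hk),
    mul_assoc]

theorem oldA_b_zero (h : IsC M a b N) (hN : Even N) :
    oldA a b N cn * cn.simple (some (b 0)) = cn.simple (some a) * oldA a b N cn := by
  have h2 := h.two_le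
  have hp := h.isD_new.isSignedPerm cn
  rw [oldA, mul_assoc, hp.flips_b_zero hN (by omega), ← mul_assoc, none_comm cn h hp.d_mem,
    mul_assoc]

/-- In the new system, conjugation by the word for `a` sends `b 0` to `a b₀ a`. -/
theorem oldA_conj (h : IsC M a b N) (hN : Even N) :
    oldA a b N cn * cn.simple (some (b 0)) * oldA a b N cn = cn.simple (some a) := by
  rw [oldA_b_zero cn h hN, mul_assoc, oldA_sq cn h hN, mul_one]

/-- The words for the old generators satisfy the old Coxeter relations in the new system. -/
theorem oldGen_liftable (h : IsC M a b N) (hN : Even N)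
    (hyp : ∀ s, s ∉ nodes a b N → M s a ≠ 0 → ∀ t ∈ nodes a b N, M s t = 2) :
    M.IsLiftable (oldGen a b N cn) := by
  have h2 := h.two_le
  have ha : ∀ i, i ≠ a → (oldGen a b N cn a * oldGen a b N cn i) ^ M a i = 1 := fun i hi => by
    rw [oldGen_a, oldGen_of_ne cn hi]
    by_cases hin : i ∈ nodes a b N
    · obtain rfl | ⟨k, hk, rfl⟩ := hin
      · exact absurd rfl hi
      by_cases hk0 : k = 0
      · subst hk0
        rw [h.a_zero]
        have h3 := cn.simple_mul_simple_pow (some a) (some (b 0))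
        rw [newMat_a hi, dLabel_b₀ (by rw [h.a_zero]; omega)] at h3
        rw [← h3]
        conv_rhs => rw [← oldA_conj cn h hN]
        simp only [pow_succ, pow_zero, one_mul, mul_assoc]
      · rw [h.a_far k hk0 hk]
        exact pow_two_of_comm (oldA_sq cn h hN) (cn.simple_mul_simple_self _)
          (oldA_b cn h hN hk0 hk)
    · by_cases h0 : M a i = 0
      · rw [h0, pow_zero]
      · rw [M.symmetric, hyp i hin (by rwa [M.symmetric]) a mem_nodes_d]
        exact pow_two_of_comm (oldA_sq cn h hN) (cn.simple_mul_simple_self _)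
          (oldA_comm_of_notMem cn h hyp hin h0).symm
  intro i j
  by_cases hi : i = a <;> by_cases hj : j = a
  · rw [hi, hj, M.diagonal, pow_one, oldGen_a, oldA_sq cn h hN]
  · rw [hi]
    exact ha j hj
  · rw [hj, M.symmetric]
    exact pow_swap (ha i hi)
  · have := cn.simple_mul_simple_pow (some i) (some j)
    rw [newMat_of_ne hi hj] at this
    rw [oldGen_of_ne cn hi, oldGen_of_ne cn hj, this]

theorem flip_congr {b b' : ℕ → W} (d : W) {k : ℕ} (h : ∀ j ≤ k, b j = b' j) :
    flip b d k = flip b' d k := by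
  induction k with
  | zero => rw [flip, flip, h 0 le_rfl]
  | succ k ih => rw [flip, flip, h _ le_rfl, ih fun j hj => h j (by omega)]

theorem flips_congr {b b' : ℕ → W} (d : W) {n : ℕ} (h : ∀ j < n, b j = b' j) :
    flips b d n = flips b' d n := by
  induction n with
  | zero => rfl
  | succ n ih =>
    rw [flips, flips, ih fun j hj => h j (by omega), flip_congr d fun j hj => h j (by omega)]

/-- If every generator outside the diagram of type `C` that has finite order with `a` commutes
with the diagram, then `a` can be traded for `zC` and `a b₀ a`. -/
theorem IsC.exists_newSystem (h : IsC M a b N) (hN : Even N)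
    (hyp : ∀ s, s ∉ nodes a b N → M s a ≠ 0 → ∀ t ∈ nodes a b N, M s t = 2) :
    ∃ cn : CoxeterSystem (newMat M a (b 0)) W, ∀ u, cn.simple u = newGen cs a b N u := by
  have h2 := h.two_le
  set c0 := (newMat M a (b 0)).toCoxeterSystem with hc0
  set ψ := c0.lift ⟨_, newGen_liftable cs h hN hyp⟩ with hψ
  set φ := cs.lift ⟨_, oldGen_liftable c0 h hN hyp⟩ with hφ
  have hψs : ∀ u, ψ (c0.simple u) = newGen cs a b N u := fun u => lift_apply_simple c0 _ u
  have hφs : ∀ i, φ (cs.simple i) = oldGen a b N c0 i := fun i => lift_apply_simple cs _ i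
  have hψA : ψ (oldA a b N c0) = cs.simple a := by
    rw [oldA, map_mul, map_flips, hψs, hψs, newGen_a]
    rw [flips_congr (b' := fun k => cs.simple (b k)) _ fun j hj => by
      rw [hψs, newGen_of_ne cs (h.ne hj)]]
    show zC cs a b N * _ = _
    rw [zC, mul_assoc]
    have := (h.isSignedPerm cs).flips_sq hN
    rw [dC, this, mul_one]
  have hφd : φ (dC cs a b) = c0.simple (some a) := by
    rw [dC, map_mul, map_mul, hφs, hφs, oldGen_a, oldGen_of_ne c0 (h.ne (by omega)),
      oldA_conj c0 h hN]
  have hφz : φ (zC cs a b N) = c0.simple none := by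
    rw [zC, map_mul, map_flips, hφs, oldGen_a]
    rw [flips_congr (b' := fun k => c0.simple (some (b k))) _ fun j hj => by
      rw [hφs, oldGen_of_ne c0 (h.ne hj)]]
    rw [← dC, hφd, oldA, mul_assoc, (h.isD_new.isSignedPerm c0).flips_sq hN, mul_one]
  -- `ψ` and `φ` are mutually inverse, as one checks on generators
  let E : (newMat M a (b 0)).Group ≃* W := MonoidHom.toMulEquiv ψ φ
    (c0.ext_simple fun u => by
      rw [MonoidHom.comp_apply, hψs, MonoidHom.id_apply]
      rcases u with _ | i
      · exact hφz
      · by_cases hi : i = a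
        · rw [hi, newGen_a, hφd]
        · rw [newGen_of_ne cs hi, hφs, oldGen_of_ne c0 hi])
    (cs.ext_simple fun i => by
      rw [MonoidHom.comp_apply, hφs, MonoidHom.id_apply]
      by_cases hi : i = a
      · rw [hi, oldGen_a, hψA]
      · rw [oldGen_of_ne c0 hi, hψs, newGen_of_ne cs hi])
  exact ⟨c0.map E, fun u => hψs u⟩

end Exchange

end NewSystem

end COdd

/-! ### Sufficiency -/

namespace COdd

open CoxeterSystem

section Bases

variable {I : Type*} {M : CoxeterMatrix I} (cs : CoxeterSystem M W)

/-- The simple reflections of a Coxeter system are a set of Coxeter generators. -/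
theorem exists_isCoxeterSystemOn : ∃ m : W → W → ℕ,
    IsCoxeterSystemOn m (Set.range cs.simple) ∧
      ∀ i j, m (cs.simple i) (cs.simple j) = M i j := by
  have hinj := simple_injective cs
  let m : W → W → ℕ := fun u v =>
    Function.extend cs.simple (fun i => Function.extend cs.simple (fun j => M i j) 0 v) 0 u
  have hm : ∀ i j, m (cs.simple i) (cs.simple j) = M i j := fun i j => by
    simp only [m, hinj.extend_apply]
  refine ⟨m, ⟨M.reindex (Equiv.ofInjective _ hinj), cs.reindex (Equiv.ofInjective _ hinj),
    ?_, ?_⟩, hm⟩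
  · intro s
    rw [reindex_simple]
    exact Equiv.apply_ofInjective_symm hinj s
  · rintro ⟨_, i, rfl⟩ ⟨_, j, rfl⟩
    rw [hm]
    show M _ _ = _
    rw [Equiv.ofInjective_symm_apply, Equiv.ofInjective_symm_apply]

variable {m : W → W → ℕ}
  {d : I} {b : ℕ → I} {N : ℕ}

theorem IsD.irreducible (hm : ∀ i j, m (cs.simple i) (cs.simple j) = M i j)
    (h : IsD M d b N) : IsIrreducibleOn m (cs.simple '' nodes d b N) := by
  have h2 := h.two_le
  have hinj := simple_injective cs
  set R : W → W → Prop := fun x y => x ∈ cs.simple '' nodes d b N ∧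
    y ∈ cs.simple '' nodes d b N ∧ x ≠ y ∧ (m x y = 0 ∨ 2 < m x y) with hR
  have hsymm : Std.Symm R := by
    constructor
    rintro _ _ ⟨⟨i, hi, rfl⟩, ⟨j, hj, rfl⟩, h1, h2⟩
    refine ⟨⟨j, hj, rfl⟩, ⟨i, hi, rfl⟩, h1.symm, ?_⟩
    rwa [hm, M.symmetric, ← hm]
  have hedge : ∀ i ∈ nodes d b N, ∀ j ∈ nodes d b N, M i j = 3 →
      R (cs.simple i) (cs.simple j) := fun i hi j hj hij => by
    refine ⟨⟨i, hi, rfl⟩, ⟨j, hj, rfl⟩, fun e => ?_, Or.inr ?_⟩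
    · rw [hinj e, M.diagonal] at hij
      omega
    · rw [hm, hij]
      omega
  have hb : ∀ k < N, Relation.ReflTransGen R (cs.simple (b 0)) (cs.simple (b k)) := by
    intro k hk
    induction k with
    | zero => exact .refl
    | succ k ih =>
      exact (ih (by omega)).tail
        (hedge _ (mem_nodes_b (by omega)) _ (mem_nodes_b hk) (h.adj k hk))
  have hall : ∀ u ∈ cs.simple '' nodes d b N,
      Relation.ReflTransGen R (cs.simple (b 0)) u := by
    rintro _ ⟨i, rfl | ⟨k, hk, rfl⟩, rfl⟩
    · refine (hb 1 (by omega)).tail (hedge _ (mem_nodes_b (by omega)) _ mem_nodes_d ?_)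
      rw [M.symmetric, h.d_one]
    · exact hb k hk
  exact ⟨⟨_, d, mem_nodes_d, rfl⟩, fun u hu v hv =>
    (Relation.ReflTransGen.stdSymm.symm _ _ (hall u hu)).trans (hall v hv)⟩

/-- Two distinct non-commuting reflections prevent a parabolic subgroup from being cyclic. -/
theorem not_isCyclic_par {J : Set I} {i j : I} (hi : i ∈ J) (hj : j ∈ J) (hij : M i j = 3) :
    ¬ IsCyclic (par cs J) := by
  intro hc
  have hcomm : cs.simple i * cs.simple j = cs.simple j * cs.simple i := by
    obtain ⟨g, hg⟩ := hc.exists_generator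
    obtain ⟨k, hk⟩ := hg ⟨_, simple_mem_par (cs := cs) hi⟩
    obtain ⟨l, hl⟩ := hg ⟨_, simple_mem_par (cs := cs) hj⟩
    have := congrArg Subtype.val ((Commute.refl g).zpow_zpow k l).eq
    simp only at hk hl
    rwa [hk, hl] at this
  have h3 := cs.simple_mul_simple_pow i j
  rw [hij, pow_succ, pow_two_of_comm (cs.simple_mul_simple_self i) (cs.simple_mul_simple_self j)
    hcomm, one_mul, mul_eq_one_iff_eq_inv, inv_simple] at h3
  rw [simple_injective cs h3, M.diagonal] at hij
  omega

/-- A finite diagram of type `D` is a base if every other generator commutes with it or has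
infinite order with one of its elements. -/
theorem IsD.isBase (hm : ∀ i j, m (cs.simple i) (cs.simple j) = M i j) (h : IsD M d b N)
    (hfin : (par cs (nodes d b N) : Set W).Finite)
    (hmax : ∀ s, s ∉ nodes d b N → (∀ t ∈ nodes d b N, M t s = 2) ∨
      ∃ t ∈ nodes d b N, M t s = 0) :
    IsBase m (Set.range cs.simple) (cs.simple '' nodes d b N) := by
  have h2 := h.two_le
  refine ⟨Set.image_subset_range _ _, h.irreducible cs hm, hfin,
    not_isCyclic_par cs (mem_nodes_b (by omega)) (mem_nodes_b (by omega)) (h.adj 0 (by omega)),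
    fun B' hB' hsub hirr hfin' => ?_⟩
  refine Set.Subset.antisymm (fun y hy => ?_) hsub
  have hpath := hirr.2 _ (hsub ⟨d, mem_nodes_d, rfl⟩) y hy
  clear hy
  induction hpath with
  | refl => exact ⟨d, mem_nodes_d, rfl⟩
  | tail _ hxy ih =>
    obtain ⟨i, hi, rfl⟩ := ih
    obtain ⟨-, hyB, -, hedge⟩ := hxy
    obtain ⟨j, rfl⟩ := hB' hyB
    by_contra hj
    rw [hm] at hedge
    rcases hmax j (fun h => hj ⟨j, h, rfl⟩) with h1 | ⟨t, ht, h1⟩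
    · rw [h1 i hi] at hedge
      omega
    · exact M_ne_zero_of_finite cs hfin' (Subgroup.subset_closure (hsub ⟨t, ht, rfl⟩))
        (Subgroup.subset_closure hyB) h1

theorem IsD.hasType {q : ℕ} (hm : ∀ i j, m (cs.simple i) (cs.simple j) = M i j)
    (h : IsD M d b (2 * q)) :
    HasType m (cs.simple '' nodes d b (2 * q)) (bMat (2 * q + 1)) := by
  have h2 := h.two_le
  let g : Fin (2 * q + 1) → I := fun i => if i.val = 2 * q then d else b (2 * q - 1 - i.val)
  have hlab : ∀ i j, M (g i) (g j) = bMat (2 * q + 1) i j := by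
    intro i j
    have hi := i.isLt
    have hj := j.isLt
    simp only [g, bMat, Fin.ext_iff]
    by_cases h1 : i.val = 2 * q <;> by_cases h3 : j.val = 2 * q
    · rw [if_pos h1, if_pos h3, M.diagonal, if_pos (h1.trans h3.symm)]
    · rw [if_pos h1, if_neg h3, h.label (by omega)]
      split_ifs <;> omega
    · rw [if_neg h1, if_pos h3, M.symmetric, h.label (by omega)]
      split_ifs <;> omega
    · rw [if_neg h1, if_neg h3, h.toIsChain.label (by omega) (by omega)]
      split_ifs <;> omega
  have hmem : ∀ i, g i ∈ nodes d b (2 * q) := by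
    intro i
    simp only [g]
    split_ifs with h1
    · exact mem_nodes_d
    · exact mem_nodes_b (by omega)
  let G : Fin (2 * q + 1) → cs.simple '' nodes d b (2 * q) := fun i =>
    ⟨cs.simple (g i), g i, hmem i, rfl⟩
  have hG : Function.Bijective G := by
    constructor
    · intro i j hij
      have h1 := hlab i j
      rw [simple_injective cs (congrArg Subtype.val hij), M.diagonal] at h1
      by_contra hne
      rw [bMat, if_neg hne] at h1
      split_ifs at h1 <;> omega
    · rintro ⟨_, i, rfl | ⟨k, hk, rfl⟩, rfl⟩
      · exact ⟨⟨2 * q, by omega⟩, Subtype.ext (congrArg cs.simple (if_pos rfl))⟩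
      · have hk' : k < 2 * q := hk
        refine ⟨⟨2 * q - 1 - k, by omega⟩, Subtype.ext (congrArg cs.simple ?_)⟩
        have h1 : ¬ (2 * q - 1 - k = 2 * q) := by omega
        simp only [g, if_neg h1]
        congr 1
        omega
  refine ⟨(Equiv.ofBijective G hG).symm, fun u v => ?_⟩
  obtain ⟨i, rfl⟩ := hG.2 u
  obtain ⟨j, rfl⟩ := hG.2 v
  rw [Equiv.ofBijective_symm_apply_apply, Equiv.ofBijective_symm_apply_apply, ← hlab]
  exact hm _ _

end Bases

section Backward

open scoped commutatorElement

/-- Sufficiency. In the system obtained by trading `a` for `zC` and `a b₀ a`, the generators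
`a b₀ a` and `b k` form a base of type `D`, and it spans `⟨B⟩` up to the centre of `⟨B⟩`. -/
theorem backward (m : W → W → ℕ) (S : Set W)
    (hcs : IsCoxeterSystemOn m S) (B : Set W) (q : ℕ) (hq : 1 ≤ q)
    (hB : IsBase m S B) (htype : HasType m B (cMat (2 * q + 1)))
    (a b c : W) (ha : a ∈ B) (hb : b ∈ B) (hc : c ∈ B) (hab : m a b = 4) (hbc : m b c = 3)
    (hyp : ∀ s ∈ S, s ∉ B → ∀ t ∈ B, m s a ≠ 0 → m s t = 2) :
    ∃ (S' : Set W) (m' : W → W → ℕ), IsCoxeterSystemOn m' S' ∧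
        ∃ B' : Set W, IsBase m' S' B' ∧ HasType m' B' (bMat (2 * q + 1)) ∧
          Matches B B' := by
  have hBS := hB.1
  obtain ⟨M, cs, hsimple, hm⟩ := hcs
  obtain ⟨bb, hC, hCB⟩ := exists_isC hm hBS hq htype ha hb hc hab hbc
  have hNe : Even (2 * q) := even_two_mul q
  set a0 : S := ⟨a, hBS ha⟩ with ha0
  have hP : par cs (nodes a0 bb (2 * q)) = Subgroup.closure B := by
    rw [par_eq_closure cs hsimple, hCB]
  have hyp' : ∀ s, s ∉ nodes a0 bb (2 * q) → M s a0 ≠ 0 →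
      ∀ t ∈ nodes a0 bb (2 * q), M s t = 2 := by
    intro s hs hsa t ht
    have hsB : (s : W) ∉ B := by
      rw [← hCB]
      rintro ⟨r, hr, hrs⟩
      exact hs (Subtype.ext hrs ▸ hr)
    refine (hm s t).trans (hyp s s.2 hsB t (by rw [← hCB]; exact ⟨t, ht, rfl⟩) ?_)
    rw [← hm s a0]
    exact hsa
  obtain ⟨cn, hcn⟩ := hC.exists_newSystem cs hNe hyp'
  have hD := hC.isD_new
  obtain ⟨m', hcs', hm'⟩ := exists_isCoxeterSystemOn cn
  set J : Set (Option S) := nodes (some a0) (fun k => some (bb k)) (2 * q) with hJ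
  have hle : par cn J ≤ par cs (nodes a0 bb (2 * q)) := by
    rw [par, Subgroup.closure_le]
    rintro _ ⟨u, rfl | ⟨k, hk, rfl⟩, rfl⟩
    · rw [hcn, newGen_a]
      exact hC.dC_mem cs
    · rw [hcn, newGen_of_ne cs (hC.ne hk)]
      exact simple_mem_nodes cs hk
  have hfin : (par cn J : Set W).Finite := by
    refine Set.Finite.subset ?_ hle
    rw [hP]
    exact hB.2.2.1
  refine ⟨_, m', hcs', cn.simple '' J, hD.isBase cn hm' hfin ?_, hD.hasType cn hm', 1, ?_⟩
  · rintro (_ | s) hs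
    · left
      rw [new_nodes]
      rintro _ ⟨i, hi, rfl⟩
      rw [CoxeterMatrix.symmetric]
      refine newMat_none ?_
      obtain rfl | ⟨k, hk, rfl⟩ := hi
      · rw [M.diagonal]; omega
      · rw [hC.label hk]; split_ifs <;> omega
    · have hs' : s ∉ nodes a0 bb (2 * q) := fun h => hs (by
        rw [new_nodes]; exact ⟨s, h, rfl⟩)
      have hsa : s ≠ a0 := fun e => hs' (e ▸ mem_nodes_d)
      by_cases h0 : M a0 s = 0
      · exact Or.inr ⟨_, mem_nodes_d, by rw [newMat_a hsa, dLabel, if_pos h0]⟩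
      · have h2 := hyp' s hs' (by rwa [M.symmetric])
        have hb0 : s ≠ bb 0 := fun e => hs' (e ▸ mem_nodes_b (by omega))
        left
        rintro _ (rfl | ⟨k, hk, rfl⟩)
        · rw [newMat_a hsa, dLabel_of_ne h0 hb0, M.symmetric, h2 _ (mem_nodes_b (by omega))]
        · rw [newMat_of_ne (hC.ne hk) hsa, M.symmetric, h2 _ (mem_nodes_b hk)]
  · -- an element of `⟨B⟩` is an element centralizing `⟨B⟩` times an element of `⟨B'⟩`
    have hdec : ∀ g ∈ par cs (nodes a0 bb (2 * q)),
        ∃ z ∈ Subgroup.centralizer (par cs (nodes a0 bb (2 * q)) : Set W), ∃ p ∈ par cn J,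
          g = z * p := by
      intro g hg
      rw [par] at hg
      induction hg using Subgroup.closure_induction with
      | mem x hx =>
        obtain ⟨t, rfl | ⟨k, hk, rfl⟩, rfl⟩ := hx
        · refine ⟨zC cs a0 bb (2 * q), ?_, _, (hD.isSignedPerm cn).flips_mem le_rfl, ?_⟩
          · exact Subgroup.mem_centralizer_iff.2 fun h hh => (hC.zC_comm cs hNe hh).symm
          · rw [flips_congr (b' := fun k => cs.simple (bb k)) _ fun j hj => by
              rw [hcn, newGen_of_ne cs (hC.ne hj)], hcn, newGen_a, zC, mul_assoc, dC,
              (hC.isSignedPerm cs).flips_sq hNe, mul_one]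
        · refine ⟨1, one_mem _, _, simple_mem_par (mem_nodes_b hk), ?_⟩
          rw [hcn, newGen_of_ne cs (hC.ne hk), one_mul]
      | one => exact ⟨1, one_mem _, 1, one_mem _, (one_mul 1).symm⟩
      | mul x y _ _ hx hy =>
        obtain ⟨z, hz, p, hp, rfl⟩ := hx
        obtain ⟨y, hy, r, hr, rfl⟩ := hy
        refine ⟨z * y, mul_mem hz hy, p * r, mul_mem hp hr, ?_⟩
        have := Subgroup.mem_centralizer_iff.1 hy p (hle hp)
        rw [mul_assoc, ← mul_assoc p, this]
        simp only [mul_assoc]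
      | inv x _ hx =>
        obtain ⟨z, hz, p, hp, rfl⟩ := hx
        refine ⟨z⁻¹, inv_mem hz, p⁻¹, inv_mem hp, ?_⟩
        rw [mul_inv_rev, Subgroup.mem_centralizer_iff.1 (inv_mem hz) _ (inv_mem (hle hp))]
    have hcomm : ⁅par cs (nodes a0 bb (2 * q)), par cs (nodes a0 bb (2 * q))⁆ =
        ⁅par cn J, par cn J⁆ := by
      refine le_antisymm ?_ (Subgroup.commutator_mono hle hle)
      rw [Subgroup.commutator_le]
      intro g hg h hh
      obtain ⟨z, hz, p, hp, rfl⟩ := hdec g hg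
      obtain ⟨y, hy, r, hr, rfl⟩ := hdec h hh
      have hzy : p * r * p⁻¹ * r⁻¹ * (z * y) = z * y * (p * r * p⁻¹ * r⁻¹) :=
        Subgroup.mem_centralizer_iff.1 (mul_mem hz hy) _
          (hle (mul_mem (mul_mem (mul_mem hp hr) (inv_mem hp)) (inv_mem hr)))
      have hyp : p * y = y * p := Subgroup.mem_centralizer_iff.1 hy p (hle hp)
      have hrz : r * z = z * r := Subgroup.mem_centralizer_iff.1 hz r (hle hr)
      have hyz : z * y = y * z := by
        have h1 : z * p * y = y * (z * p) := Subgroup.mem_centralizer_iff.1 hy _ hg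
        rw [mul_assoc, hyp, ← mul_assoc, ← mul_assoc] at h1
        exact mul_right_cancel h1
      have this : ⁅z * p, y * r⁆ = ⁅p, r⁆ := by
        have h1 : z * p * (y * r) = z * y * (p * r) := by
          rw [mul_assoc, ← mul_assoc p, hyp]; simp only [mul_assoc]
        have h2 : y * r * (z * p) = z * y * (r * p) := by
          rw [mul_assoc, ← mul_assoc r, hrz, hyz]; simp only [mul_assoc]
        calc ⁅z * p, y * r⁆ = z * p * (y * r) * (y * r * (z * p))⁻¹ := by
              rw [commutatorElement_def]; group
          _ = z * y * (p * r * p⁻¹ * r⁻¹) * (z * y)⁻¹ := by rw [h1, h2]; group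
          _ = ⁅p, r⁆ := by rw [← hzy, mul_inv_cancel_right, commutatorElement_def]
      rw [this]
      exact Subgroup.commutator_mem_commutator hp hr
    rw [hP] at hcomm
    rw [hcomm]
    ext x
    simp [Subgroup.mem_map, par]

end Backward

end COdd

theorem c_odd_matching_criterion (m : W → W → ℕ) (S : Set W)
    (hcs : IsCoxeterSystemOn m S) (hfin : S.Finite)
    (B : Set W) (q : ℕ) (hq : 1 ≤ q)
    (hB : IsBase m S B) (htype : HasType m B (cMat (2 * q + 1)))
    (a b c : W) (ha : a ∈ B) (hb : b ∈ B) (hc : c ∈ B)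
    (hab : m a b = 4) (hbc : m b c = 3) :
    (∃ (S' : Set W) (m' : W → W → ℕ), IsCoxeterSystemOn m' S' ∧
        ∃ B' : Set W, IsBase m' S' B' ∧ HasType m' B' (bMat (2 * q + 1)) ∧
          Matches B B') ↔
      (∀ s ∈ S, s ∉ B → ∀ t ∈ B, m s a ≠ 0 → m s t = 2) := by
  constructor
  · rintro ⟨S', m', hcs', B', hB', htype', hmatch⟩ s hs hsB t ht hsa
    exact COdd.forward m S hcs B q hq hB htype a b c ha hb hc hab hbc S' m' hcs' B' hB' htype'
      hmatch s hs hsB hsa t ht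
  · intro hyp
    exact COdd.backward m S hcs B q hq hB htype a b c ha hb hc hab hbc hyp
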